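/- Let K be a field and let Q be a continuous factor which is also a K-algebra, with unique rank function N_Q. Assume there exists a K-subalgebra Q_0 of Q of countable K-dimension which is dense in Q for the N_Q-metric. Then the following are equivalent: (i) Q is isomorphic to M_K as a K-algebra; (ii) Q is isomorphic as a K-algebra to the completion of some ultramatricial K-algebra B with respect to the metric induced by some extremal pseudo-rank function on B; (iii) for every eps > 0 and all x_1, ..., x_n in Q there exist a matricial K-subalgebra A of Q and elements y_1, ..., y_n in A with N_Q(x_i - y_i) < eps for all i. -/

import Mathlib

open scoped TensorProduct Kronecker

noncomputable section

namespace AraClaramunt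

/-! ### Pseudo-rank functions and rank metric notions -/

/-- A pseudo-rank function on a unital ring. -/
structure IsPseudoRankFunction {R : Type*} [Ring R] (N : R → ℝ) : Prop where
  nonneg : ∀ x : R, 0 ≤ N x
  le_one : ∀ x : R, N x ≤ 1
  map_one : N 1 = 1
  subadditive : ∀ a b : R, N (a + b) ≤ N a + N b
  mul_le_left : ∀ a b : R, N (a * b) ≤ N a
  mul_le_right : ∀ a b : R, N (a * b) ≤ N b
  add_of_orthogonal : ∀ e f : R, IsIdempotentElem e → IsIdempotentElem f →
    e * f = 0 → f * e = 0 → N (e + f) = N e + N f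

/-- A rank function is a faithful pseudo-rank function. -/
def IsRankFunction {R : Type*} [Ring R] (N : R → ℝ) : Prop :=
  IsPseudoRankFunction N ∧ ∀ x : R, N x = 0 → x = 0

/-- Cauchy sequence for the pseudo-metric `d(x,y) = N (x - y)`. -/
def RankCauchy {R : Type*} [Ring R] (N : R → ℝ) (u : ℕ → R) : Prop :=
  ∀ ε : ℝ, 0 < ε → ∃ n₀ : ℕ, ∀ m n : ℕ, n₀ ≤ m → n₀ ≤ n → N (u m - u n) < ε

/-- Convergence for the pseudo-metric `d(x,y) = N (x - y)`. -/
def RankTendsto {R : Type*} [Ring R] (N : R → ℝ) (u : ℕ → R) (x : R) : Prop :=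
  ∀ ε : ℝ, 0 < ε → ∃ n₀ : ℕ, ∀ n : ℕ, n₀ ≤ n → N (u n - x) < ε

/-- Completeness with respect to the pseudo-metric `d(x,y) = N (x - y)`. -/
def RankComplete {R : Type*} [Ring R] (N : R → ℝ) : Prop :=
  ∀ u : ℕ → R, RankCauchy N u → ∃ x : R, RankTendsto N u x

/-- Density of a subset with respect to the pseudo-metric `d(x,y) = N (x - y)`. -/
def RankDense {R : Type*} [Ring R] (N : R → ℝ) (S : Set R) : Prop :=
  ∀ x : R, ∀ ε : ℝ, 0 < ε → ∃ y ∈ S, N (x - y) < ε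

/-- von Neumann regularity. -/
def VNRegular (R : Type*) [Ring R] : Prop :=
  ∀ x : R, ∃ y : R, x = x * y * x

/-- A continuous factor: a simple, von Neumann regular, right and left self-injective ring
admitting a rank function whose image is all of `[0,1]`. -/
def IsContinuousFactor (R : Type*) [Ring R] : Prop :=
  IsSimpleRing R ∧ VNRegular R ∧ Module.Injective R R ∧ Module.Injective Rᵐᵒᵖ Rᵐᵒᵖ ∧
    ∃ N : R → ℝ, IsRankFunction N ∧ Set.range N = Set.Icc (0 : ℝ) 1

/-- An extremal pseudo-rank function: an extreme point of the convex set of all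
pseudo-rank functions. -/
def IsExtremalPseudoRankFunction {R : Type*} [Ring R] (N : R → ℝ) : Prop :=
  N ∈ Set.extremePoints ℝ {S : R → ℝ | IsPseudoRankFunction S}

/-! ### Matricial and ultramatricial algebras -/

/-- A matricial `K`-algebra. -/
def IsMatricialAlgebra (K : Type*) [Field K] (A : Type*) [Ring A] [Algebra K A] : Prop :=
  ∃ (k : ℕ) (n : Fin (k + 1) → ℕ), (∀ i, 0 < n i) ∧
    Nonempty (A ≃ₐ[K] ((i : Fin (k + 1)) → Matrix (Fin (n i)) (Fin (n i)) K))

/-- An ultramatricial `K`-algebra: the increasing union of matricial subalgebras. -/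
def IsUltramatricialAlgebra (K : Type*) [Field K] (B : Type*) [Ring B] [Algebra K B] : Prop :=
  ∃ C : ℕ → Subalgebra K B, (∀ n, C n ≤ C (n + 1)) ∧
    (∀ n, IsMatricialAlgebra K (C n)) ∧ (∀ b : B, ∃ n, b ∈ C n)

/-- `Q`, with rank function `N`, is the rank-metric completion of a direct limit of the matrix
algebras `M_{p n}(K)`: it is complete and carries a dense increasing tower of unital subalgebras
isomorphic to `M_{p n}(K)`. -/
def IsMatrixTowerCompletion (K : Type*) [Field K] (Q : Type*) [Ring Q] [Algebra K Q]
    (N : Q → ℝ) (p : ℕ → ℕ) : Prop :=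
  IsRankFunction N ∧ RankComplete N ∧
    ∃ A : ℕ → Subalgebra K Q, (∀ n, A n ≤ A (n + 1)) ∧
      (∀ n, Nonempty ((A n) ≃ₐ[K] Matrix (Fin (p n)) (Fin (p n)) K)) ∧
      RankDense N (⋃ n, (A n : Set Q))

/-- `Q` is (a copy of) von Neumann's continuous factor `M_K`, the completion of
`lim_n M_{2^n}(K)` with respect to its unique rank function. -/
def IsMK (K : Type*) [Field K] (Q : Type*) [Ring Q] [Algebra K Q] (N : Q → ℝ) : Prop :=
  IsMatrixTowerCompletion K Q N (fun n => 2 ^ n)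

/-- The canonical block-diagonal unital embedding `M_a(K) → M_b(K)`, `z ↦ z ⊗ 1_g`,
where `b = a * g`. -/
def blockEmbedFun (K : Type*) [Semiring K] {a : ℕ} (g b : ℕ) (h : a * g = b)
    (z : Matrix (Fin a) (Fin a) K) : Matrix (Fin b) (Fin b) K :=
  Matrix.reindex (finProdFinEquiv.trans (finCongr h)) (finProdFinEquiv.trans (finCongr h))
    (z ⊗ₖ (1 : Matrix (Fin g) (Fin g) K))

end AraClaramunt
namespace AraClaramunt

/-- Witness that `Q` (with rank function `NQ`) is isomorphic, as a `K`-algebra, to the completion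
of an ultramatricial `K`-algebra `B` with respect to the metric induced by an extremal
pseudo-rank function `NB` on `B`. -/
structure UltramatricialCompletionData (K : Type) [Field K]
    (Q : Type) [Ring Q] [Algebra K Q] (NQ : Q → ℝ) : Type 1 where
  B : Type
  [ringB : Ring B]
  [algB : Algebra K B]
  NB : B → ℝ
  pseudoRank : IsPseudoRankFunction NB
  extremal : IsExtremalPseudoRankFunction NB
  ultramatricial : IsUltramatricialAlgebra K B
  φ : B →ₐ[K] Q
  rank_eq : ∀ b : B, NQ (φ b) = NB b
  dense : RankDense NQ (Set.range φ)
  complete : RankComplete NQ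

/-!
Self-injectivity lets one glue the countably many pieces of a greedy exhaustion argument, so the
idempotents of `Q` are compared by their rank: `e` is isomorphic to a subidempotent of `f` as soon
as `N e ≤ N f`. With ranks filling `[0, 1]`, this makes the rank function unique and, with
injectivity on the other side, complete.

The implications (i) ⇒ (ii) ⇒ (iii) are formal, because a pseudo-rank function on a directed union
of matrix algebras is unique. For (iii) ⇒ (i) one builds an increasing tower of copies of
`M_{2^n}(K)` absorbing a countable spanning set of `Q₀`. Given `M_{2^n}(K) ≅ A ⊆ Q` with diagonal
matrix unit `e`, finitely many elements of the corner `e Q e` are approximated by a matricial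
algebra. Cutting its minimal idempotents into pieces whose ranks are dyadic multiples of `N e`, and
discarding a remainder of small rank, places the approximants in the span of a system of
`2^k × 2^k` matrix units with sum `e`, hence in a copy of `M_{2^(n+k)}(K)` containing `A`.
-/

theorem mul_mul_of_mul_eq {M : Type*} [Semigroup M] {a b c : M} (h : a * b = c) (x : M) :
    a * (b * x) = c * x := by rw [← mul_assoc, h]

theorem exists_seq_of_step {α : Type*} (P : ℕ → α → Prop) (R : ℕ → α → α → Prop) (a₀ : α)
    (h₀ : P 0 a₀) (step : ∀ n a, P n a → ∃ a', P (n + 1) a' ∧ R n a a') :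
    ∃ s : ℕ → α, s 0 = a₀ ∧ ∀ n, R n (s n) (s (n + 1)) := by
  choose! next hnext using step
  let s : ℕ → α := fun n => Nat.rec a₀ next n
  have hs : ∀ n, P n (s n) := fun n => Nat.rec h₀ (fun n ih => (hnext n _ ih).1) n
  exact ⟨s, rfl, fun n => (hnext n _ (hs n)).2⟩

/-! ### Pseudo-rank functions -/

namespace IsPseudoRankFunction

variable {R S : Type*} [Ring R] [Ring S] {N : R → ℝ}

theorem comp (hN : IsPseudoRankFunction N) (φ : S →+* R) :
    IsPseudoRankFunction fun x => N (φ x) where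
  nonneg _ := hN.nonneg _
  le_one _ := hN.le_one _
  map_one := by rw [_root_.map_one, hN.map_one]
  subadditive a b := by rw [map_add]; exact hN.subadditive _ _
  mul_le_left a b := by rw [map_mul]; exact hN.mul_le_left _ _
  mul_le_right a b := by rw [map_mul]; exact hN.mul_le_right _ _
  add_of_orthogonal e f he hf hef hfe := by
    rw [map_add]
    exact hN.add_of_orthogonal _ _ (he.map φ) (hf.map φ) (by rw [← map_mul, hef, _root_.map_zero])
      (by rw [← map_mul, hfe, _root_.map_zero])

theorem map_zero (hN : IsPseudoRankFunction N) : N 0 = 0 := by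
  simpa using hN.add_of_orthogonal 0 0 .zero .zero (mul_zero 0) (mul_zero 0)

theorem map_neg (hN : IsPseudoRankFunction N) (x : R) : N (-x) = N x :=
  le_antisymm (by simpa using hN.mul_le_right (-1) x) (by simpa using hN.mul_le_right (-1) (-x))

theorem map_sub_rev (hN : IsPseudoRankFunction N) (x y : R) : N (x - y) = N (y - x) := by
  rw [← hN.map_neg, neg_sub]

theorem sub_le (hN : IsPseudoRankFunction N) (x y : R) : N (x - y) ≤ N x + N y := by
  simpa only [sub_eq_add_neg, hN.map_neg] using hN.subadditive x (-y)

theorem sub_le_sub_add_sub (hN : IsPseudoRankFunction N) (x y z : R) :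
    N (x - z) ≤ N (x - y) + N (y - z) := by
  simpa using hN.subadditive (x - y) (y - z)

theorem mul_mul_le (hN : IsPseudoRankFunction N) (a b c : R) : N (a * b * c) ≤ N b :=
  (hN.mul_le_left _ _).trans (hN.mul_le_right _ _)

theorem smul_le {K : Type*} [CommSemiring K] [Algebra K R] (hN : IsPseudoRankFunction N) (k : K)
    (x : R) : N (k • x) ≤ N x := by
  simpa only [smul_mul_assoc, one_mul] using hN.mul_le_right (k • (1 : R)) x

theorem sum_le (hN : IsPseudoRankFunction N) {ι : Type*} (s : Finset ι) (f : ι → R) :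
    N (∑ i ∈ s, f i) ≤ ∑ i ∈ s, N (f i) :=
  Finset.le_sum_of_subadditive N hN.map_zero.le hN.subadditive s f

theorem map_sum_of_orthogonalIdempotents (hN : IsPseudoRankFunction N) {ι : Type*} {p : ι → R}
    (hp : OrthogonalIdempotents p) (s : Finset ι) : N (∑ i ∈ s, p i) = ∑ i ∈ s, N (p i) := by
  classical
  induction s using Finset.induction_on with
  | empty => exact hN.map_zero
  | insert i s hi ih =>
    have h_sum_mul : (∑ j ∈ s, p j) * p i = 0 := by
      rw [Finset.sum_mul]
      exact Finset.sum_eq_zero fun j hj => hp.ortho fun h => hi (h ▸ hj)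
    rw [Finset.sum_insert hi, Finset.sum_insert hi, ← ih]
    exact hN.add_of_orthogonal _ _ (hp.idem i) hp.isIdempotentElem_sum
      (hp.mul_sum_of_notMem hi) h_sum_mul

theorem map_sub_of_isIdempotentElem (hN : IsPseudoRankFunction N) {e p : R}
    (he : IsIdempotentElem e) (hp : IsIdempotentElem p) (hep : e * p = p) (hpe : p * e = p) :
    N (e - p) = N e - N p := by
  have h := hN.add_of_orthogonal (e - p) p (hp.sub he hpe hep) hp
    (by rw [sub_mul, hep, hp.eq, sub_self]) (by rw [mul_sub, hpe, hp.eq, sub_self])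
  rw [sub_add_cancel] at h
  linarith

theorem map_one_sub (hN : IsPseudoRankFunction N) {e : R} (he : IsIdempotentElem e) :
    N (1 - e) = 1 - N e := by
  rw [hN.map_sub_of_isIdempotentElem .one he (one_mul e) (mul_one e), hN.map_one]

theorem map_mul_of_mul_mul_self (hN : IsPseudoRankFunction N) {x y : R} (h : x * y * x = x) :
    N (x * y) = N x :=
  le_antisymm (hN.mul_le_left _ _) (by
    conv_lhs => rw [← h]
    exact hN.mul_le_left _ _)

theorem map_mul_of_mul_mul_self' (hN : IsPseudoRankFunction N) {x y : R} (h : x * y * x = x) :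
    N (y * x) = N x :=
  le_antisymm (hN.mul_le_right _ _) (by
    conv_lhs => rw [← h, mul_assoc]
    exact hN.mul_le_right _ _)

end IsPseudoRankFunction

theorem IsRankFunction.eq_of_sub_idempotent {R : Type*} [Ring R] {N : R → ℝ}
    (hN : IsRankFunction N) {e p : R} (he : IsIdempotentElem e) (hp : IsIdempotentElem p)
    (hep : e * p = p) (hpe : p * e = p) (hle : N e ≤ N p) : p = e := by
  have h_sub := hN.1.map_sub_of_isIdempotentElem he hp hep hpe
  exact (sub_eq_zero.1 (hN.2 _ (le_antisymm (by linarith) (hN.1.nonneg _)))).symm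

/-! ### Self-injectivity and gluing -/

section Injective

variable {R : Type*} [Ring R]

theorem exists_mul_eq_of_baer (hR : Module.Baer R R) (I : Ideal R) (g : I →ₗ[R] R) :
    ∃ c : R, ∀ x : I, x * c = g x := by
  obtain ⟨g', hg'⟩ := hR I g
  refine ⟨g' 1, fun x => ?_⟩
  rw [← hg' x x.2, ← smul_eq_mul, ← map_smul, smul_eq_mul, mul_one]

theorem exists_mul_eq_of_monotone_ideals (hR : Module.Baer R R) (I : ℕ → Ideal R)
    (hI : Monotone I) (u : ℕ → R) (hu : ∀ n m, n ≤ m → ∀ x ∈ I n, x * u m = x * u n) :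
    ∃ c : R, ∀ n, ∀ x ∈ I n, x * c = x * u n := by
  have h_mem : ∀ x : (⨆ n, I n : Ideal R), ∃ n, (x : R) ∈ I n := fun x =>
    (Submodule.mem_iSup_of_directed I hI.directed_le).1 x.2
  choose k hk using h_mem
  have mul_u_eq : ∀ (x : (⨆ n, I n : Ideal R)) (n : ℕ), (x : R) ∈ I n → x * u (k x) = x * u n :=
    fun x n hn => (le_total n (k x)).elim (fun h => hu _ _ h _ hn)
      fun h => (hu _ _ h _ (hk x)).symm
  let g : (⨆ n, I n : Ideal R) →ₗ[R] R :=
    { toFun x := x * u (k x)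
      map_add' x y := by
        have hx : (x : R) ∈ I (max (k x) (k y)) := hI (le_max_left _ _) (hk x)
        have hy : (y : R) ∈ I (max (k x) (k y)) := hI (le_max_right _ _) (hk y)
        rw [mul_u_eq x _ hx, mul_u_eq y _ hy, mul_u_eq (x + y) _ ((I _).add_mem hx hy),
          Submodule.coe_add, add_mul]
      map_smul' r x := by
        rw [mul_u_eq (r • x) _ ((I (k x)).mul_mem_left r (hk x)), Submodule.coe_smul,
          smul_mul_assoc, RingHom.id_apply] }
  obtain ⟨c, hc⟩ := exists_mul_eq_of_baer hR _ g
  refine ⟨c, fun n x hx => ?_⟩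
  have hx' : x ∈ (⨆ n, I n : Ideal R) := le_iSup I n hx
  exact (hc ⟨x, hx'⟩).trans (mul_u_eq ⟨x, hx'⟩ n hx)

theorem exists_mul_eq_of_orthogonalIdempotents (hR : Module.Baer R R) {p : ℕ → R}
    (hp : OrthogonalIdempotents p) (a : ℕ → R) : ∃ c : R, ∀ k, p k * c = p k * a k := by
  let I : ℕ → Ideal R := fun n => Ideal.span (p '' Set.Iio n)
  let u : ℕ → R := fun n => ∑ j ∈ Finset.range n, p j * a j
  have p_mul_u : ∀ n k, k < n → p k * u n = p k * a k := fun n k hk => by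
    simp only [u, Finset.mul_sum, ← mul_assoc, hp.mul_eq, ite_mul, zero_mul]
    rw [Finset.sum_ite_eq, if_pos (Finset.mem_range.2 hk)]
  have I_mono : Monotone I := fun n m h => Ideal.span_mono (Set.image_mono (Set.Iio_subset_Iio h))
  have u_compat : ∀ n m, n ≤ m → ∀ x ∈ I n, x * u m = x * u n := by
    intro n m h x hx
    induction hx using Submodule.span_induction with
    | mem x hx =>
      obtain ⟨k, hk, rfl⟩ := hx
      rw [p_mul_u _ _ (hk.trans_le h), p_mul_u _ _ hk]
    | zero => simp only [zero_mul]
    | add x y _ _ hx hy => rw [add_mul, add_mul, hx, hy]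
    | smul r x _ hx => rw [smul_mul_assoc, smul_mul_assoc, hx]
  obtain ⟨c, hc⟩ := exists_mul_eq_of_monotone_ideals hR I I_mono u u_compat
  refine ⟨c, fun k => ?_⟩
  rw [hc (k + 1) _ (Ideal.subset_span (Set.mem_image_of_mem p (Set.mem_Iio.2 k.lt_succ_self))),
    p_mul_u _ _ k.lt_succ_self]

theorem exists_mul_mul_ne_zero [IsSimpleRing R] {x y : R} (hx : x ≠ 0) (hy : y ≠ 0) :
    ∃ q, x * q * y ≠ 0 := by
  by_contra! h
  let J : TwoSidedIdeal R := TwoSidedIdeal.mk' {z | ∀ q, x * q * z = 0}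
    (fun q => mul_zero _) (fun ha hb q => by rw [mul_add, ha, hb, add_zero])
    (fun ha q => by rw [mul_neg, ha, neg_zero])
    (fun hb q => by rw [← mul_assoc, mul_assoc x, hb])
    (fun ha q => by rw [← mul_assoc, ha, zero_mul])
  have mem_J : ∀ z, z ∈ J ↔ ∀ q, x * q * z = 0 := fun z => by simp [J]
  have h_one : (1 : R) ∈ J := IsSimpleRing.one_mem_of_ne_zero_mem J hy ((mem_J y).2 h)
  exact hx (by simpa using (mem_J 1).1 h_one 1)

end Injective

/-! ### Partial isomorphisms -/

section PartialIso

variable {R : Type*} [Ring R]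

/-- `a` and `b` are mutually inverse isomorphisms between the subidempotent `a * b` of `e` and the
subidempotent `b * a` of `f`. -/
structure IsPartialIso (e f a b : R) : Prop where
  left_mul : e * a = a
  mul_right : a * f = a
  left_mul' : f * b = b
  mul_right' : b * e = b
  mul_mul_self : a * b * a = a
  mul_mul_self' : b * a * b = b

/-- The idempotent `e` is isomorphic to a subidempotent of `f`. -/
def Subequivalent (e f : R) : Prop :=
  ∃ a b : R, IsPartialIso e f a b ∧ a * b = e

namespace IsPartialIso

variable {e f a b : R}

theorem zero (e f : R) : IsPartialIso e f 0 0 := by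
  constructor <;> simp only [mul_zero, zero_mul]

theorem symm (h : IsPartialIso e f a b) : IsPartialIso f e b a :=
  ⟨h.left_mul', h.mul_right', h.left_mul, h.mul_right, h.mul_mul_self', h.mul_mul_self⟩

theorem left_mul_mul (h : IsPartialIso e f a b) : e * (a * b) = a * b := by
  rw [← mul_assoc, h.left_mul]

theorem mul_mul_right (h : IsPartialIso e f a b) : a * b * e = a * b := by
  rw [mul_assoc, h.mul_right']

theorem isIdempotentElem_mul (h : IsPartialIso e f a b) : IsIdempotentElem (a * b) := by
  rw [IsIdempotentElem, ← mul_assoc, h.mul_mul_self]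

theorem isIdempotentElem_sub_mul (h : IsPartialIso e f a b) (he : IsIdempotentElem e) :
    IsIdempotentElem (e - a * b) :=
  h.isIdempotentElem_mul.sub he h.mul_mul_right h.left_mul_mul

theorem map_mul {N : R → ℝ} (hN : IsPseudoRankFunction N) (h : IsPartialIso e f a b) :
    N (a * b) = N a :=
  hN.map_mul_of_mul_mul_self h.mul_mul_self

theorem map_mul' {N : R → ℝ} (hN : IsPseudoRankFunction N) (h : IsPartialIso e f a b) :
    N (b * a) = N a :=
  hN.map_mul_of_mul_mul_self' h.mul_mul_self

theorem map_sub_mul {N : R → ℝ} (hN : IsPseudoRankFunction N) (h : IsPartialIso e f a b)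
    (he : IsIdempotentElem e) : N (e - a * b) = N e - N a := by
  rw [hN.map_sub_of_isIdempotentElem he h.isIdempotentElem_mul h.left_mul_mul h.mul_mul_right,
    h.map_mul hN]

theorem mono_left (h : IsPartialIso e f a b) {e' : R} (he : e' * e = e) (he' : e * e' = e) :
    IsPartialIso e' f a b :=
  ⟨by rw [← h.left_mul, ← mul_assoc, he], h.mul_right, h.left_mul',
    by rw [← h.mul_right', mul_assoc, he'], h.mul_mul_self, h.mul_mul_self'⟩

theorem of_mul_eq_left (h_left : e * a = a) (h_right : a * f = a) (h_left' : f * b = b)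
    (h_right' : b * e = b) (hab : a * b = e) : IsPartialIso e f a b :=
  ⟨h_left, h_right, h_left', h_right', by rw [hab, h_left], by rw [mul_assoc, hab, h_right']⟩

theorem mul_right_mul_right (hf : IsIdempotentElem f) (he : IsIdempotentElem e) (hea : e * a = a)
    (hfb : f * b = b) (haba : a * b * a = a) (hbab : b * a * b = b) :
    IsPartialIso e f (a * f) (b * e) where
  left_mul := by rw [← mul_assoc, hea]
  mul_right := by rw [mul_assoc, hf.eq]
  left_mul' := by rw [← mul_assoc, hfb]
  mul_right' := by rw [mul_assoc, he.eq]
  mul_mul_self := calc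
    a * f * (b * e) * (a * f) = a * (f * b) * (e * a) * f := by simp only [mul_assoc]
    _ = a * f := by rw [hfb, hea, haba]
  mul_mul_self' := calc
    b * e * (a * f) * (b * e) = b * (e * a) * (f * b) * e := by simp only [mul_assoc]
    _ = b * e := by rw [hfb, hea, hbab]

theorem add {u v : R} (h : IsPartialIso e f a b)
    (h' : IsPartialIso (e - a * b) (f - b * a) u v) :
    IsPartialIso e f (a + u) (b + v) ∧ (a + u) * (b + v) = a * b + u * v := by
  have hbu : b * u = 0 := by
    rw [← h'.left_mul, ← mul_assoc, mul_sub, h.mul_right', ← mul_assoc, h.mul_mul_self', sub_self,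
      zero_mul]
  have hav : a * v = 0 := by
    rw [← h'.left_mul', ← mul_assoc, mul_sub, h.mul_right, ← mul_assoc, h.mul_mul_self, sub_self,
      zero_mul]
  have hva : v * a = 0 := by
    rw [← h'.mul_right', mul_assoc, sub_mul, h.left_mul, h.mul_mul_self, sub_self, mul_zero]
  have hub : u * b = 0 := by
    rw [← h'.mul_right, mul_assoc, sub_mul, h.left_mul', h.mul_mul_self', sub_self, mul_zero]
  have heu : e * u = u := by
    have := h'.left_mul
    rwa [sub_mul, mul_assoc, hbu, mul_zero, sub_zero] at this
  have hfv : f * v = v := by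
    have := h'.left_mul'
    rwa [sub_mul, mul_assoc, hav, mul_zero, sub_zero] at this
  have huf : u * f = u := by
    have := h'.mul_right
    rwa [mul_sub, ← mul_assoc, hub, zero_mul, sub_zero] at this
  have hve : v * e = v := by
    have := h'.mul_right'
    rwa [mul_sub, ← mul_assoc, hva, zero_mul, sub_zero] at this
  have h_mul : (a + u) * (b + v) = a * b + u * v := by
    rw [mul_add, add_mul, add_mul, hub, hav, add_zero, zero_add]
  refine ⟨⟨?_, ?_, ?_, ?_, ?_, ?_⟩, h_mul⟩
  · rw [mul_add, h.left_mul, heu]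
  · rw [add_mul, h.mul_right, huf]
  · rw [mul_add, h.left_mul', hfv]
  · rw [add_mul, h.mul_right', hve]
  · rw [h_mul, mul_add, add_mul, add_mul, h.mul_mul_self, h'.mul_mul_self, mul_assoc, mul_assoc,
      hva, hbu, mul_zero, mul_zero, add_zero, zero_add]
  · rw [mul_assoc, h_mul, mul_add, add_mul, add_mul, ← mul_assoc, ← mul_assoc, ← mul_assoc,
      ← mul_assoc, h.mul_mul_self', h'.mul_mul_self', hva, hbu, zero_mul, zero_mul, add_zero,
      zero_add]

end IsPartialIso

theorem VNRegular.exists_isPartialIso (hR : VNRegular R) {e f x : R} (he : IsIdempotentElem e)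
    (hf : IsIdempotentElem f) (hex : e * x = x) (hxf : x * f = x) :
    ∃ y, IsPartialIso e f x y := by
  obtain ⟨y, hy⟩ := hR x
  have hx_mul : x * (f * (y * x * y) * e) * x = x := calc
    _ = x * f * y * x * y * (e * x) := by simp only [mul_assoc]
    _ = x := by rw [hex, hxf, ← hy, ← hy]
  refine ⟨f * (y * x * y) * e, hex, hxf, ?_, ?_, hx_mul, ?_⟩
  · rw [← mul_assoc, ← mul_assoc, hf.eq]
  · rw [mul_assoc, he.eq]
  · calc
      _ = f * y * (x * y * (e * x) * f * y * x) * y * e := by simp only [mul_assoc]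
      _ = f * (y * x * y) * e := by rw [hex, ← hy, hxf, ← hy]; simp only [mul_assoc]

theorem VNRegular.exists_mul_mul_self (hR : VNRegular R) (x : R) :
    ∃ y, x * y * x = x ∧ y * x * y = y := by
  obtain ⟨y, h⟩ := hR.exists_isPartialIso .one .one (one_mul x) (mul_one x)
  exact ⟨y, h.mul_mul_self, h.mul_mul_self'⟩

end PartialIso

/-! ### Peeling sequences and comparability -/

section Peeling

variable {R : Type*} [Ring R]

/-- A countable exhaustion of `E 0` and `F 0` by isomorphic pieces: at each stage the isomorphic
subidempotents `a n * b n` and `b n * a n` are removed from the remainders `E n` and `F n`. -/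
structure IsPeeling (E F a b : ℕ → R) : Prop where
  idem_left : IsIdempotentElem (E 0)
  idem_right : IsIdempotentElem (F 0)
  isPartialIso : ∀ n, IsPartialIso (E n) (F n) (a n) (b n)
  left_succ : ∀ n, E (n + 1) = E n - a n * b n
  right_succ : ∀ n, F (n + 1) = F n - b n * a n

theorem exists_isPeeling (P : ℕ → R → R → Prop) (C : ℕ → R → R → R → R → Prop) {e f : R}
    (he : IsIdempotentElem e) (hf : IsIdempotentElem f) (h₀ : P 0 e f)
    (step : ∀ n E F, P n E F → ∃ a b, IsPartialIso E F a b ∧ C n E F a b ∧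
      P (n + 1) (E - a * b) (F - b * a)) :
    ∃ E F a b, IsPeeling E F a b ∧ E 0 = e ∧ F 0 = f ∧ ∀ n, C n (E n) (F n) (a n) (b n) := by
  obtain ⟨s, hs₀, hs⟩ := exists_seq_of_step (fun n (s : R × R) => P n s.1 s.2)
    (fun n s s' => ∃ a b, IsPartialIso s.1 s.2 a b ∧ C n s.1 s.2 a b ∧
      s' = (s.1 - a * b, s.2 - b * a)) (e, f) h₀ fun n s hs => by
        obtain ⟨a, b, hab, hC, hP⟩ := step n s.1 s.2 hs
        exact ⟨_, hP, a, b, hab, hC, rfl⟩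
  choose a b hab hC hs' using hs
  refine ⟨fun n => (s n).1, fun n => (s n).2, a, b, ⟨?_, ?_, hab, ?_, ?_⟩, ?_, ?_, hC⟩
  · rwa [hs₀]
  · rwa [hs₀]
  · exact fun n => congrArg Prod.fst (hs' n)
  · exact fun n => congrArg Prod.snd (hs' n)
  · exact congrArg Prod.fst hs₀
  · exact congrArg Prod.snd hs₀

namespace IsPeeling

variable {E F a b : ℕ → R}

theorem symm (h : IsPeeling E F a b) : IsPeeling F E b a :=
  ⟨h.idem_right, h.idem_left, fun n => (h.isPartialIso n).symm, h.right_succ, h.left_succ⟩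

theorem isIdempotentElem_left (h : IsPeeling E F a b) (n : ℕ) : IsIdempotentElem (E n) := by
  induction n with
  | zero => exact h.idem_left
  | succ n ih =>
    rw [h.left_succ]
    exact (h.isPartialIso n).isIdempotentElem_sub_mul ih

theorem left_mul_left_of_le (h : IsPeeling E F a b) {n m : ℕ} (hnm : n ≤ m) :
    E n * E m = E m ∧ E m * E n = E m := by
  induction m, hnm using Nat.le_induction with
  | base => exact ⟨h.isIdempotentElem_left n, h.isIdempotentElem_left n⟩
  | succ m _ ih =>
    have hE : E m * E (m + 1) = E (m + 1) := by
      rw [h.left_succ, mul_sub, (h.isIdempotentElem_left m).eq, (h.isPartialIso m).left_mul_mul]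
    have hE' : E (m + 1) * E m = E (m + 1) := by
      rw [h.left_succ, sub_mul, (h.isIdempotentElem_left m).eq, (h.isPartialIso m).mul_mul_right]
    exact ⟨by rw [← hE, ← mul_assoc, ih.1], by rw [← hE', mul_assoc, ih.2]⟩

theorem isPartialIso_of_le (h : IsPeeling E F a b) {n m : ℕ} (hnm : n ≤ m) :
    IsPartialIso (E n) (F n) (a m) (b m) :=
  have hE := h.left_mul_left_of_le hnm
  have hF := h.symm.left_mul_left_of_le hnm
  (((h.isPartialIso m).mono_left hE.1 hE.2).symm.mono_left hF.1 hF.2).symm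

theorem mul_left_succ (h : IsPeeling E F a b) (n : ℕ) : b n * E (n + 1) = 0 := by
  rw [h.left_succ, mul_sub, (h.isPartialIso n).mul_right', ← mul_assoc,
    (h.isPartialIso n).mul_mul_self', sub_self]

theorem left_succ_mul (h : IsPeeling E F a b) (n : ℕ) : E (n + 1) * a n = 0 := by
  rw [h.left_succ, sub_mul, (h.isPartialIso n).left_mul, (h.isPartialIso n).mul_mul_self, sub_self]

theorem mul_eq_zero_of_ne (h : IsPeeling E F a b) {i j : ℕ} (hij : i ≠ j) : b i * a j = 0 := by
  rcases hij.lt_or_gt with hlt | hlt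
  · rw [← (h.isPartialIso_of_le hlt).left_mul, ← mul_assoc, h.mul_left_succ, zero_mul]
  · rw [← (h.isPartialIso_of_le hlt).mul_right', mul_assoc, h.left_succ_mul, mul_zero]

theorem orthogonalIdempotents (h : IsPeeling E F a b) :
    OrthogonalIdempotents fun n => a n * b n where
  idem n := (h.isPartialIso n).isIdempotentElem_mul
  ortho i j hij := by
    change a i * b i * (a j * b j) = 0
    rw [mul_assoc, mul_mul_of_mul_eq (h.mul_eq_zero_of_ne hij), zero_mul, mul_zero]

theorem map_left_add_sum (h : IsPeeling E F a b) {N : R → ℝ} (hN : IsPseudoRankFunction N)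
    (n : ℕ) : N (E n) + ∑ k ∈ Finset.range n, N (a k) = N (E 0) := by
  induction n with
  | zero => rw [Finset.sum_range_zero, add_zero]
  | succ n ih =>
    rw [h.left_succ, (h.isPartialIso n).map_sub_mul hN (h.isIdempotentElem_left n),
      Finset.sum_range_succ, ← ih]
    ring

theorem left_mul_eq_self (h : IsPeeling E F a b) {x : R} (hx : E 0 * x = x)
    (hab : ∀ n, a n * b n * x = 0) (n : ℕ) : E n * x = x := by
  induction n with
  | zero => exact hx
  | succ n ih => rw [h.left_succ, sub_mul, ih, hab, sub_zero]

theorem exists_mul_eq (h : IsPeeling E F a b) (hR : Module.Baer R R) :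
    ∃ c, E 0 * c = c ∧ c * F 0 = c ∧ ∀ n, a n * b n * c = a n := by
  obtain ⟨c, hc⟩ := exists_mul_eq_of_orthogonalIdempotents hR h.orthogonalIdempotents a
  have h₀ := fun n : ℕ => h.isPartialIso_of_le n.zero_le
  refine ⟨E 0 * c * F 0, ?_, ?_, fun n => ?_⟩
  · rw [← mul_assoc, ← mul_assoc, h.idem_left.eq]
  · rw [mul_assoc, h.idem_right.eq]
  · rw [← mul_assoc, ← mul_assoc, (h₀ n).mul_mul_right, hc, (h₀ n).mul_mul_self, (h₀ n).mul_right]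

theorem mul_mul_sub_eq_zero (h : IsPeeling E F a b) {c d : R}
    (hc : ∀ n, a n * b n * c = a n) (hd : ∀ n, b n * a n * d = b n) (n : ℕ) :
    a n * b n * (E 0 - c * d) = 0 := by
  have h₀ := h.isPartialIso_of_le n.zero_le
  have had : a n * d = a n * b n := by
    conv_lhs => rw [← h₀.mul_mul_self, mul_assoc, mul_assoc, ← mul_assoc (b n), hd]
  rw [mul_sub, h₀.mul_mul_right, ← mul_assoc, hc, had, sub_self]

theorem exists_limit (h : IsPeeling E F a b) (hR : Module.Baer R R) :
    ∃ c d, E 0 * c = c ∧ c * F 0 = c ∧ F 0 * d = d ∧ d * E 0 = d ∧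
      (∀ n, E n * (E 0 - c * d) = E 0 - c * d) ∧ ∀ n, F n * (F 0 - d * c) = F 0 - d * c := by
  obtain ⟨c, hc₁, hc₂, hc⟩ := h.exists_mul_eq hR
  obtain ⟨d, hd₁, hd₂, hd⟩ := h.symm.exists_mul_eq hR
  refine ⟨c, d, hc₁, hc₂, hd₁, hd₂, h.left_mul_eq_self ?_ (h.mul_mul_sub_eq_zero hc hd),
    h.symm.left_mul_eq_self ?_ (h.symm.mul_mul_sub_eq_zero hd hc)⟩
  · rw [mul_sub, h.idem_left.eq, ← mul_assoc, hc₁]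
  · rw [mul_sub, h.idem_right.eq, ← mul_assoc, hd₁]

end IsPeeling

variable {N : R → ℝ}

theorem exists_isPartialIso_forall_le_two_mul (hN : IsPseudoRankFunction N) (e f : R) :
    ∃ a b, IsPartialIso e f a b ∧ ∀ a' b', IsPartialIso e f a' b' → N a' ≤ 2 * N a := by
  let S : Set ℝ := {t | ∃ a b, IsPartialIso e f a b ∧ N a = t}
  have zero_mem : (0 : ℝ) ∈ S := ⟨0, 0, .zero e f, hN.map_zero⟩
  have bdd : BddAbove S := ⟨1, by rintro _ ⟨a, _, _, rfl⟩; exact hN.le_one a⟩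
  have le_sup : ∀ a b, IsPartialIso e f a b → N a ≤ sSup S := fun a b h =>
    le_csSup bdd ⟨a, b, h, rfl⟩
  rcases (le_csSup bdd zero_mem).eq_or_lt with h | h
  · refine ⟨0, 0, .zero e f, fun a b hab => ?_⟩
    rw [hN.map_zero, mul_zero, h]
    exact le_sup a b hab
  · obtain ⟨_, ⟨a, b, hab, rfl⟩, hlt⟩ := exists_lt_of_lt_csSup ⟨0, zero_mem⟩ (half_lt_self h)
    exact ⟨a, b, hab, fun a' b' h' => (le_sup a' b' h').trans (by linarith)⟩

theorem exists_isPartialIso_map_ge [IsSimpleRing R] (hN : IsRankFunction N) (hR : VNRegular R)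
    {x y : R} (hx : x ≠ 0) (hy : y ≠ 0) :
    ∃ r > 0, ∀ e f, IsIdempotentElem e → IsIdempotentElem f → e * x = x → f * y = y →
      ∃ a b, IsPartialIso e f a b ∧ r ≤ N a := by
  obtain ⟨q, hq⟩ := exists_mul_mul_ne_zero hx hy
  obtain ⟨w, hzwz, hwzw⟩ := hR.exists_mul_mul_self (x * q * y)
  have hab : x * q * y * w * (x * q) * (y * w) = x * q * y * w := calc
    _ = x * q * y * w * (x * q * y) * w := by simp only [mul_assoc]
    _ = x * q * y * w := by rw [hzwz]
  have haba : x * q * y * w * (x * q) * (y * w) * (x * q * y * w * (x * q)) =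
      x * q * y * w * (x * q) := by
    rw [hab, ← mul_assoc, ← mul_assoc _ (x * q * y), hzwz]
  have hbab : y * w * (x * q * y * w * (x * q)) * (y * w) = y * w := by
    rw [mul_assoc, hab, mul_assoc, ← mul_assoc w, hwzw]
  refine ⟨N (x * q * y), (hN.1.nonneg _).lt_of_ne fun h => hq (hN.2 _ h.symm),
    fun e f he hf hex hfy => ⟨_, _, .mul_right_mul_right hf he ?_ ?_ haba hbab, ?_⟩⟩
  · simp only [← mul_assoc, hex]
  · rw [← mul_assoc, hfy]
  · calc N (x * q * y) = N (x * q * y * w) := (hN.1.map_mul_of_mul_mul_self hzwz).symm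
      _ = N (x * q * y * w * (x * q) * f * (y * w)) := by
        rw [mul_assoc _ f, ← mul_assoc f, hfy, hab]
      _ ≤ N (x * q * y * w * (x * q) * f) := hN.1.mul_le_left _ _

theorem subequivalent_or_subequivalent [IsSimpleRing R] (hN : IsRankFunction N)
    (hR : VNRegular R) (hinj : Module.Baer R R) {e f : R} (he : IsIdempotentElem e)
    (hf : IsIdempotentElem f) : Subequivalent e f ∨ Subequivalent f e := by
  obtain ⟨E, F, a, b, h, rfl, rfl, h_max⟩ := exists_isPeeling (fun _ _ _ => True)
    (fun _ E F a _ => ∀ a' b', IsPartialIso E F a' b' → N a' ≤ 2 * N a) he hf trivial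
    fun _ E F _ => by
      obtain ⟨a, b, hab, h_max⟩ := exists_isPartialIso_forall_le_two_mul hN.1 E F
      exact ⟨a, b, hab, h_max, trivial⟩
  obtain ⟨c, d, hc₁, hc₂, hd₁, hd₂, hE, hF⟩ := h.exists_limit hinj
  by_cases hx : E 0 - c * d = 0
  · have hcd := (sub_eq_zero.1 hx).symm
    exact .inl ⟨c, d, .of_mul_eq_left hc₁ hc₂ hd₁ hd₂ hcd, hcd⟩
  by_cases hy : F 0 - d * c = 0
  · have hdc := (sub_eq_zero.1 hy).symm
    exact .inr ⟨d, c, .of_mul_eq_left hd₁ hd₂ hc₁ hc₂ hdc, hdc⟩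
  obtain ⟨r, hr, h_ge⟩ := exists_isPartialIso_map_ge hN hR hx hy
  have le_map : ∀ n, r ≤ 2 * N (a n) := fun n => by
    obtain ⟨a', b', hab, hr'⟩ := h_ge (E n) (F n) (h.isIdempotentElem_left n)
      (h.symm.isIdempotentElem_left n) (hE n) (hF n)
    exact hr'.trans (h_max n a' b' hab)
  obtain ⟨n, hn⟩ := exists_nat_gt (2 / r)
  have h_sum : n • (r / 2) ≤ ∑ k ∈ Finset.range n, N (a k) := by
    simpa using Finset.card_nsmul_le_sum (Finset.range n) (fun k => N (a k)) (r / 2)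
      fun k _ => by linarith [le_map k]
  have h_rank := h.map_left_add_sum hN.1 n
  rw [div_lt_iff₀ hr] at hn
  rw [nsmul_eq_mul] at h_sum
  linarith [hN.1.nonneg (E n), hN.1.le_one (E 0)]

/-- Idempotents are compared by their `N`-ranks. -/
def RankComparable (N : R → ℝ) : Prop :=
  ∀ e f : R, IsIdempotentElem e → IsIdempotentElem f → N e ≤ N f → Subequivalent e f

theorem rankComparable_of_baer [IsSimpleRing R] (hN : IsRankFunction N) (hR : VNRegular R)
    (hinj : Module.Baer R R) : RankComparable N := by
  intro e f he hf hle
  rcases subequivalent_or_subequivalent hN hR hinj he hf with h | ⟨a, b, hab, rfl⟩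
  · exact h
  · refine ⟨b, a, hab.symm, hN.eq_of_sub_idempotent he hab.symm.isIdempotentElem_mul
      hab.symm.left_mul_mul hab.symm.mul_mul_right ?_⟩
    rwa [hab.map_mul' hN.1, ← hab.map_mul hN.1]

/-- Every value in the unit interval is the `N`-rank of an idempotent. -/
def RankSurjective (N : R → ℝ) : Prop :=
  ∀ t ∈ Set.Icc (0 : ℝ) 1, ∃ e : R, IsIdempotentElem e ∧ N e = t

theorem rankSurjective_of_range_eq (hN : IsPseudoRankFunction N) (hR : VNRegular R)
    (h_range : Set.range N = Set.Icc (0 : ℝ) 1) : RankSurjective N := by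
  intro t ht
  obtain ⟨x, rfl⟩ : t ∈ Set.range N := h_range ▸ ht
  obtain ⟨y, hxy⟩ := hR.exists_isPartialIso .one .one (one_mul x) (mul_one x)
  exact ⟨x * y, hxy.isIdempotentElem_mul, hxy.map_mul hN⟩

theorem exists_isIdempotentElem_mul_sub_eq_zero (hN : IsPseudoRankFunction N) (hR : VNRegular R)
    {e : R} (he : IsIdempotentElem e) (x : R) :
    ∃ p, IsIdempotentElem p ∧ e * p = p ∧ p * e = p ∧ x * (e - p) = 0 ∧ N p ≤ N x := by
  obtain ⟨y, hxy⟩ := hR.exists_isPartialIso .one he (one_mul (x * e)) (by rw [mul_assoc, he.eq])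
  refine ⟨y * (x * e), hxy.symm.isIdempotentElem_mul, hxy.symm.left_mul_mul,
    hxy.symm.mul_mul_right, ?_, ?_⟩
  · rw [mul_sub, ← hxy.symm.left_mul_mul, ← mul_assoc x, ← mul_assoc, hxy.mul_mul_self, sub_self]
  · exact (hxy.map_mul' hN).trans_le (hN.mul_le_left _ _)

theorem exists_mul_eq_self_of_summable_rank (hN : IsPseudoRankFunction N) (hR : VNRegular R)
    (hinj : Module.Baer R R) (hcomp : RankComparable N) (hsurj : RankSurjective N)
    {s : ℝ} (hs : s ∈ Set.Icc (0 : ℝ) 1) {x : ℕ → R} (hx : ∀ k, N (x k) ≤ s / 2 ^ (k + 1)) :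
    ∃ h : R, N h ≤ s ∧ ∀ k, x k * h = x k := by
  obtain ⟨f, hf, hfs⟩ := hsurj s hs
  obtain ⟨E, F, a, b, h, hE₀, hF₀, hxE⟩ := exists_isPeeling
    (fun k E F => IsIdempotentElem E ∧ IsIdempotentElem F ∧ s / 2 ^ k ≤ N F)
    (fun k E _ a b => x k * (E - a * b) = 0) .one hf ⟨.one, hf, by rw [hfs, pow_zero, div_one]⟩
    fun k E F ⟨hE, hF, hsF⟩ => by
      have h_half : s / 2 ^ k = s / 2 ^ (k + 1) + s / 2 ^ (k + 1) := by ring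
      have hs_nonneg : 0 ≤ s / 2 ^ (k + 1) := div_nonneg hs.1 (by positivity)
      obtain ⟨p, hp, hEp, hpE, hxp, hNp⟩ :=
        exists_isIdempotentElem_mul_sub_eq_zero hN hR hE (x k)
      obtain ⟨a, b, hab, rfl⟩ := hcomp p F hp hF (by linarith [hx k, hsF])
      refine ⟨a, b, hab.mono_left hEp hpE, hxp, hab.isIdempotentElem_mul.sub hE hpE hEp,
        hab.symm.isIdempotentElem_sub_mul hF, ?_⟩
      rw [hab.symm.map_sub_mul hN hF, ← hab.symm.map_mul' hN]
      linarith [hx k, hsF]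
  obtain ⟨c, d, -, hcF, -, -, hEcd, -⟩ := h.exists_limit hinj
  refine ⟨c * d, ?_, fun k => ?_⟩
  · rw [← hcF, hF₀, ← hfs]
    exact hN.mul_mul_le _ _ _
  · have h_zero : x k * (1 - c * d) = 0 := by
      rw [← hE₀, ← hEcd (k + 1), h.left_succ, ← mul_assoc, hxE, zero_mul]
    rwa [mul_sub, mul_one, sub_eq_zero, eq_comm] at h_zero

end Peeling

/-! ### Completeness -/

section Complete

variable {R : Type*} [Ring R] {N : R → ℝ}

theorem RankCauchy.exists_monotone_subseq {u : ℕ → R} (hu : RankCauchy N u) :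
    ∃ k : ℕ → ℕ, Monotone k ∧ ∀ n i, k n ≤ i → N (u i - u (k n)) ≤ 1 / 2 ^ (n + 1) := by
  choose m hm using fun n : ℕ => hu (1 / 2 ^ (n + 1)) (by positivity)
  have hk : ∀ n, m n ≤ partialSups m n := le_partialSups m
  exact ⟨partialSups m, (partialSups m).monotone,
    fun n i hi => (hm n _ _ ((hk n).trans hi) (hk n)).le⟩

/-- The common right annihilator of the elements `x n`, `x (n + 1)`, …, as a left ideal of the
opposite ring. -/
def tailAnnihilator (x : ℕ → R) (n : ℕ) : Ideal Rᵐᵒᵖ where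
  carrier := {z | ∀ j, n ≤ j → x j * z.unop = 0}
  add_mem' ha hb j hj := by rw [MulOpposite.unop_add, mul_add, ha j hj, hb j hj, add_zero]
  zero_mem' _ _ := mul_zero _
  smul_mem' r z hz j hj := by
    rw [smul_eq_mul, MulOpposite.unop_mul, ← mul_assoc, hz j hj, zero_mul]

theorem tailAnnihilator_mono (x : ℕ → R) : Monotone (tailAnnihilator x) :=
  fun _ _ hnm _ hz j hj => hz j (hnm.trans hj)

theorem exists_mul_eq_mul_of_tailAnnihilator (hinj : Module.Baer Rᵐᵒᵖ Rᵐᵒᵖ) (w : ℕ → R) :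
    ∃ c : R, ∀ n z, MulOpposite.op z ∈ tailAnnihilator (fun j => w (j + 1) - w j) n →
      c * z = w n * z := by
  obtain ⟨c, hc⟩ := exists_mul_eq_of_monotone_ideals hinj _
    (tailAnnihilator_mono fun j => w (j + 1) - w j) (fun n => MulOpposite.op (w n)) (by
      intro n m hnm z hz
      induction m, hnm using Nat.le_induction with
      | base => rfl
      | succ m hm ih =>
        rw [← ih]
        have h_zero := hz m hm
        rw [sub_mul, sub_eq_zero] at h_zero
        exact MulOpposite.unop_injective h_zero)
  exact ⟨c.unop, fun n z hz => congrArg MulOpposite.unop (hc n _ hz)⟩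

theorem exists_forall_map_sub_le (hN : IsPseudoRankFunction N) (hR : VNRegular R)
    (hinj : Module.Baer R R) (hinj' : Module.Baer Rᵐᵒᵖ Rᵐᵒᵖ) (hcomp : RankComparable N)
    (hsurj : RankSurjective N) {w : ℕ → R} (hw : ∀ n, N (w (n + 1) - w n) ≤ 1 / 2 ^ (n + 1)) :
    ∃ c, ∀ n, N (c - w n) ≤ 1 / 2 ^ n := by
  obtain ⟨c, hc⟩ := exists_mul_eq_mul_of_tailAnnihilator hinj' w
  refine ⟨c, fun n => ?_⟩
  have h_mem : (1 / 2 ^ n : ℝ) ∈ Set.Icc 0 1 :=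
    ⟨by positivity, (div_le_one (by positivity)).2 (one_le_pow₀ one_le_two)⟩
  obtain ⟨h, hh, hwh⟩ := exists_mul_eq_self_of_summable_rank hN hR hinj hcomp hsurj h_mem
    (x := fun j => w (n + j + 1) - w (n + j)) fun j => (hw (n + j)).trans_eq (by
      rw [add_assoc, pow_add, div_div])
  have h_zero : c * (1 - h) = w n * (1 - h) := hc n _ fun j hj => by
    obtain ⟨i, rfl⟩ := Nat.exists_eq_add_of_le hj
    rw [MulOpposite.unop_op, mul_sub, mul_one, hwh, sub_self]
  have h_eq : c - w n = (c - w n) * h := by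
    rw [← sub_eq_zero, ← mul_one_sub, sub_mul, h_zero, sub_self]
  rw [h_eq]
  exact (hN.mul_le_right _ _).trans hh

theorem rankComplete_of_baer (hN : IsPseudoRankFunction N) (hR : VNRegular R)
    (hinj : Module.Baer R R) (hinj' : Module.Baer Rᵐᵒᵖ Rᵐᵒᵖ) (hcomp : RankComparable N)
    (hsurj : RankSurjective N) : RankComplete N := by
  intro u hu
  obtain ⟨k, hk_mono, hk⟩ := hu.exists_monotone_subseq
  obtain ⟨c, hc⟩ := exists_forall_map_sub_le hN hR hinj hinj' hcomp hsurj
    (w := fun n => u (k n)) fun n => hk n _ (hk_mono n.le_succ)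
  refine ⟨c, fun ε hε => ?_⟩
  obtain ⟨n, hn⟩ := exists_pow_lt_of_lt_one (half_pos hε) one_half_lt_one
  refine ⟨k n, fun i hi => ?_⟩
  have h_tail : N (u i - u (k n)) ≤ (1 / 2) ^ n := (hk n i hi).trans (by
    rw [← one_div_pow]
    exact pow_le_pow_of_le_one (by norm_num) (by norm_num) n.le_succ)
  have h_lim : N (u (k n) - c) ≤ (1 / 2) ^ n := by
    rw [hN.map_sub_rev, one_div_pow]
    exact hc n
  linarith [hN.sub_le_sub_add_sub (u i) (u (k n)) c]

end Complete

/-! ### Frames -/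

section Frame

variable {R S ι κ : Type*} [Ring R] [Ring S]

/-- A family of isomorphisms `u i`, with inverses `v i`, from the idempotents `π i` onto mutually
orthogonal subidempotents `u i * v i` of `e`. For a constant family `π` the products `u i * v j`
are matrix units. -/
structure IsFrame (π : ι → R) (e : R) (u v : ι → R) : Prop where
  v_mul_u : ∀ i, v i * u i = π i
  v_mul_u_of_ne : ∀ i j, i ≠ j → v i * u j = 0
  u_mul : ∀ i, u i * π i = u i
  mul_v : ∀ i, π i * v i = v i
  left_mul : ∀ i, e * u i = u i
  mul_right : ∀ i, v i * e = v i

namespace IsFrame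

theorem of_isEmpty [IsEmpty ι] (π : ι → R) (e : R) (u v : ι → R) : IsFrame π e u v := by
  constructor <;> exact isEmptyElim

theorem of_subsingleton [Subsingleton ι] {e f a b : R} (h : IsPartialIso e f a b)
    (hab : a * b = e) : IsFrame (fun _ : ι => e) f (fun _ => b) fun _ => a :=
  ⟨fun _ => hab, fun i j hij => (hij (Subsingleton.elim i j)).elim, fun _ => h.mul_right',
    fun _ => h.left_mul, fun _ => h.left_mul', fun _ => h.mul_right⟩

variable {π : ι → R} {e : R} {u v : ι → R}

theorem isPartialIso (h : IsFrame π e u v) (i : ι) : IsPartialIso e (π i) (u i) (v i) :=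
  (IsPartialIso.of_mul_eq_left (h.mul_v i) (h.mul_right i) (h.left_mul i) (h.u_mul i)
    (h.v_mul_u i)).symm

theorem orthogonalIdempotents (h : IsFrame π e u v) :
    OrthogonalIdempotents fun i => u i * v i where
  idem i := (h.isPartialIso i).isIdempotentElem_mul
  ortho i j hij := by
    change u i * v i * (u j * v j) = 0
    rw [mul_assoc, mul_mul_of_mul_eq (h.v_mul_u_of_ne i j hij), zero_mul, mul_zero]

theorem map {F : Type*} [FunLike F R S] [NonUnitalRingHomClass F R S] (h : IsFrame π e u v)
    (φ : F) : IsFrame (fun i => φ (π i)) (φ e) (fun i => φ (u i)) fun i => φ (v i) where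
  v_mul_u i := by rw [← map_mul, h.v_mul_u]
  v_mul_u_of_ne i j hij := by rw [← map_mul, h.v_mul_u_of_ne i j hij, map_zero]
  u_mul i := by rw [← map_mul, h.u_mul]
  mul_v i := by rw [← map_mul, h.mul_v]
  left_mul i := by rw [← map_mul, h.left_mul]
  mul_right i := by rw [← map_mul, h.mul_right]

theorem comp_injective (h : IsFrame π e u v) {g : κ → ι} (hg : Function.Injective g) :
    IsFrame (fun i => π (g i)) e (fun i => u (g i)) fun i => v (g i) :=
  ⟨fun _ => h.v_mul_u _, fun _ _ hij => h.v_mul_u_of_ne _ _ (hg.ne hij), fun _ => h.u_mul _,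
    fun _ => h.mul_v _, fun _ => h.left_mul _, fun _ => h.mul_right _⟩

theorem transport (h : IsFrame π e u v) {f s s' : R} (hs : IsPartialIso f e s s')
    (hs' : s' * s = e) : IsFrame π f (fun i => s * u i) fun i => v i * s' := by
  have mul_mul : ∀ i j, v i * s' * (s * u j) = v i * u j := fun i j => by
    rw [mul_assoc, mul_mul_of_mul_eq hs', h.left_mul]
  exact ⟨fun i => by rw [mul_mul, h.v_mul_u],
    fun i j hij => by rw [mul_mul, h.v_mul_u_of_ne i j hij],
    fun i => by rw [mul_assoc, h.u_mul], fun i => by rw [← mul_assoc, h.mul_v],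
    fun i => by rw [← mul_assoc, hs.left_mul], fun i => by rw [mul_assoc, hs.mul_right']⟩

theorem sigma {κ : ι → Type*} {ρ u' v' : ∀ i, κ i → R} (h : IsFrame π e u v)
    (h' : ∀ i, IsFrame (ρ i) (π i) (u' i) (v' i)) :
    IsFrame (fun x : Σ i, κ i => ρ x.1 x.2) e (fun x => u x.1 * u' x.1 x.2)
      fun x => v' x.1 x.2 * v x.1 where
  v_mul_u := fun ⟨i, c⟩ => by
    rw [mul_assoc, mul_mul_of_mul_eq (h.v_mul_u i), (h' i).left_mul, (h' i).v_mul_u]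
  v_mul_u_of_ne := fun ⟨i, c⟩ ⟨j, d⟩ hne => by
    by_cases hij : i = j
    · subst hij
      rw [mul_assoc, mul_mul_of_mul_eq (h.v_mul_u i), (h' i).left_mul,
        (h' i).v_mul_u_of_ne c d fun hcd => hne (hcd ▸ rfl)]
    · rw [mul_assoc, mul_mul_of_mul_eq (h.v_mul_u_of_ne i j hij), zero_mul, mul_zero]
  u_mul x := by rw [mul_assoc, (h' x.1).u_mul]
  mul_v x := by rw [← mul_assoc, (h' x.1).mul_v]
  left_mul x := by rw [← mul_assoc, h.left_mul]
  mul_right x := by rw [mul_assoc, h.mul_right]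

theorem sumElim {ρ : κ → R} {f : R} {u' v' : κ → R} (h : IsFrame π f u v)
    (h' : IsFrame ρ (e - f) u' v') (he : IsIdempotentElem e) (hf : IsIdempotentElem f)
    (hef : e * f = f) (hfe : f * e = f) :
    IsFrame (Sum.elim π ρ) e (Sum.elim u u') (Sum.elim v v') := by
  have v_mul_u' : ∀ i j, v i * u' j = 0 := fun i j => by
    rw [← h.mul_right, ← h'.left_mul, mul_assoc, ← mul_assoc f, mul_sub, hfe, hf.eq, sub_self,
      zero_mul, mul_zero]
  have v'_mul_u : ∀ i j, v' j * u i = 0 := fun i j => by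
    rw [← h.left_mul, ← h'.mul_right, mul_assoc, ← mul_assoc _ f, sub_mul, hef, hf.eq, sub_self,
      zero_mul, mul_zero]
  refine ⟨?_, ?_, ?_, ?_, ?_, ?_⟩
  · rintro (i | i)
    exacts [h.v_mul_u i, h'.v_mul_u i]
  · rintro (i | i) (j | j) hij
    exacts [h.v_mul_u_of_ne i j fun h => hij (h ▸ rfl), v_mul_u' i j, v'_mul_u j i,
      h'.v_mul_u_of_ne i j fun h => hij (h ▸ rfl)]
  · rintro (i | i)
    exacts [h.u_mul i, h'.u_mul i]
  · rintro (i | i)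
    exacts [h.mul_v i, h'.mul_v i]
  · rintro (i | i)
    · exact (by rw [← h.left_mul, ← mul_assoc, hef] : e * u i = u i)
    · exact (by rw [← h'.left_mul, ← mul_assoc, mul_sub, he.eq, hef] : e * u' i = u' i)
  · rintro (i | i)
    · exact (by rw [← h.mul_right, mul_assoc, hfe] : v i * e = v i)
    · exact (by rw [← h'.mul_right, mul_assoc, sub_mul, he.eq, hfe] : v' i * e = v' i)

variable [Fintype ι]

theorem sum_mul_u (h : IsFrame π e u v) (j : ι) : (∑ i, u i * v i) * u j = u j := by
  rw [Finset.sum_mul, Fintype.sum_eq_single j fun i hij => by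
    rw [mul_assoc, h.v_mul_u_of_ne i j hij, mul_zero], mul_assoc, h.v_mul_u, h.u_mul]

theorem v_mul_sum (h : IsFrame π e u v) (j : ι) : v j * ∑ i, u i * v i = v j := by
  rw [Finset.mul_sum, Fintype.sum_eq_single j fun i hij => by
    rw [← mul_assoc, h.v_mul_u_of_ne j i hij.symm, zero_mul], ← mul_assoc, h.v_mul_u, h.mul_v]

theorem isIdempotentElem_sum (h : IsFrame π e u v) : IsIdempotentElem (∑ i, u i * v i) :=
  h.orthogonalIdempotents.isIdempotentElem_sum

theorem left_mul_sum (h : IsFrame π e u v) : e * ∑ i, u i * v i = ∑ i, u i * v i := by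
  simp only [Finset.mul_sum, ← mul_assoc, h.left_mul]

theorem sum_mul_right (h : IsFrame π e u v) : (∑ i, u i * v i) * e = ∑ i, u i * v i := by
  simp only [Finset.sum_mul, mul_assoc, h.mul_right]

theorem restrict (h : IsFrame π e u v) : IsFrame π (∑ i, u i * v i) u v :=
  { h with left_mul := h.sum_mul_u, mul_right := h.v_mul_sum }

variable {N : R → ℝ}

theorem map_sum (h : IsFrame π e u v) (hN : IsPseudoRankFunction N) :
    N (∑ i, u i * v i) = ∑ i, N (π i) := by
  rw [hN.map_sum_of_orthogonalIdempotents h.orthogonalIdempotents]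
  exact Finset.sum_congr rfl fun i _ => by
    rw [← h.v_mul_u i, (h.isPartialIso i).map_mul' hN, (h.isPartialIso i).map_mul hN]

theorem map_sub_sum (h : IsFrame π e u v) (hN : IsPseudoRankFunction N)
    (he : IsIdempotentElem e) : N (e - ∑ i, u i * v i) = N e - ∑ i, N (π i) := by
  rw [hN.map_sub_of_isIdempotentElem he h.isIdempotentElem_sum h.left_mul_sum h.sum_mul_right,
    h.map_sum hN]

theorem sum_eq_of_map_le (h : IsFrame π e u v) (hN : IsRankFunction N) (he : IsIdempotentElem e)
    (hle : N e ≤ ∑ i, N (π i)) : ∑ i, u i * v i = e :=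
  hN.eq_of_sub_idempotent he h.isIdempotentElem_sum h.left_mul_sum h.sum_mul_right
    (hle.trans_eq (h.map_sum hN.1).symm)

end IsFrame

variable {N : R → ℝ}

theorem RankComparable.exists_isFrame (hcomp : RankComparable N) (hN : IsPseudoRankFunction N)
    {π e : R} (hπ : IsIdempotentElem π) (he : IsIdempotentElem e) (m : ℕ) (hm : m * N π ≤ N e) :
    ∃ u v : Fin m → R, IsFrame (fun _ => π) e u v := by
  induction m with
  | zero => exact ⟨fun _ => 0, fun _ => 0, .of_isEmpty _ _ _ _⟩
  | succ m ih =>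
    rw [Nat.cast_succ, add_one_mul] at hm
    obtain ⟨u, v, h⟩ := ih (by linarith [hN.nonneg π])
    have h_idem : IsIdempotentElem (e - ∑ i, u i * v i) :=
      h.isIdempotentElem_sum.sub he h.sum_mul_right h.left_mul_sum
    have h_rank : N (e - ∑ i, u i * v i) = N e - m * N π := by
      simpa using h.map_sub_sum hN he
    obtain ⟨a, b, hab, hπab⟩ := hcomp π _ hπ h_idem (by linarith)
    have h_sum := h.restrict.sumElim (IsFrame.of_subsingleton (ι := Fin 1) hab hπab) he
      h.isIdempotentElem_sum h.left_mul_sum h.sum_mul_right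
    exact ⟨_, _, by simpa only [Sum.elim_lam_const_lam_const] using
      h_sum.comp_injective finSumFinEquiv.symm.injective⟩

theorem RankComparable.exists_isFrame_extension (hcomp : RankComparable N)
    (hN : IsRankFunction N) [Fintype ι] {π e : R} {p q : ι → R}
    (h : IsFrame (fun _ : ι => π) e p q) (hπ : IsIdempotentElem π) (he : IsIdempotentElem e)
    {m : ℕ} (hm : m * N π = N e) (hcard : Fintype.card ι ≤ m) :
    ∃ u v : Fin m → R, IsFrame (fun _ => π) e u v ∧ ∑ i, u i * v i = e ∧
      ∃ g : ι → Fin m, ∀ i, u (g i) = p i ∧ v (g i) = q i := by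
  have h_idem := h.isIdempotentElem_sum.sub he h.sum_mul_right h.left_mul_sum
  have h_rank : (m - Fintype.card ι : ℕ) * N π ≤ N (e - ∑ i, p i * q i) := by
    rw [h.map_sub_sum hN.1 he, ← hm, Nat.cast_sub hcard, sub_mul]
    simp
  obtain ⟨p', q', h'⟩ := hcomp.exists_isFrame hN.1 hπ h_idem _ h_rank
  have h_sum := h.restrict.sumElim h' he h.isIdempotentElem_sum h.left_mul_sum h.sum_mul_right
  let σ : ι ⊕ Fin (m - Fintype.card ι) ≃ Fin m :=
    Fintype.equivFinOfCardEq (by rw [Fintype.card_sum, Fintype.card_fin]; omega)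
  have h_frame : IsFrame (fun _ : Fin m => π) e (fun i => Sum.elim p p' (σ.symm i))
      fun i => Sum.elim q q' (σ.symm i) := by
    simpa only [Sum.elim_lam_const_lam_const] using h_sum.comp_injective σ.symm.injective
  refine ⟨_, _, h_frame, h_frame.sum_eq_of_map_le hN he ?_, fun i => σ (.inl i), fun i => ?_⟩
  · simp [hm]
  · simp

end Frame

/-! ### Uniqueness of the rank function -/

section Uniqueness

variable {R : Type*} [Ring R] {N N₀ : R → ℝ}

theorem IsFrame.map_eq_one_div_card {ι : Type*} [Fintype ι] {π : R} {u v : ι → R}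
    (h : IsFrame (fun _ => π) 1 u v) (h_sum : ∑ i, u i * v i = 1) (hN : IsPseudoRankFunction N) :
    N π = 1 / Fintype.card ι := by
  have h_rank := h.map_sum hN
  rw [h_sum, hN.map_one, Finset.sum_const, nsmul_eq_mul, Finset.card_univ] at h_rank
  exact eq_one_div_of_mul_eq_one_right h_rank.symm

theorem RankComparable.exists_isFrame_one (hcomp : RankComparable N) (hN : IsRankFunction N)
    (hsurj : RankSurjective N) {m : ℕ} (hm : 0 < m) :
    ∃ (π : R) (u v : Fin m → R), IsIdempotentElem π ∧ IsFrame (fun _ => π) 1 u v ∧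
      ∑ i, u i * v i = 1 := by
  have hm' : (0 : ℝ) < m := Nat.cast_pos.2 hm
  obtain ⟨π, hπ, h_rank⟩ := hsurj (1 / m)
    ⟨by positivity, (div_le_one hm').2 (Nat.one_le_cast.2 hm)⟩
  have h_mul : m * N π = N 1 := by rw [h_rank, hN.1.map_one, mul_one_div_cancel hm'.ne']
  obtain ⟨u, v, h⟩ := hcomp.exists_isFrame hN.1 hπ .one m h_mul.le
  exact ⟨π, u, v, hπ, h, h.sum_eq_of_map_le hN .one (by simp [h_mul])⟩

theorem RankComparable.le_of_isIdempotentElem (hcomp : RankComparable N₀) (hN₀ : IsRankFunction N₀)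
    (hsurj : RankSurjective N₀) (hN : IsPseudoRankFunction N) {e : R} (he : IsIdempotentElem e) :
    N₀ e ≤ N e := by
  refine le_of_forall_pos_le_add fun ε hε => ?_
  obtain ⟨m, hm⟩ := exists_nat_gt (1 / ε)
  have hm_pos : (0 : ℝ) < m := lt_trans (by positivity) hm
  obtain ⟨π, u, v, hπ, h, h_sum⟩ := hcomp.exists_isFrame_one hN₀ hsurj (Nat.cast_pos.1 hm_pos)
  have hπ_rank : ∀ {M : R → ℝ}, IsPseudoRankFunction M → m * M π = 1 := fun hM => by
    rw [h.map_eq_one_div_card h_sum hM, Fintype.card_fin, mul_one_div_cancel hm_pos.ne']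
  have h_floor := Nat.floor_le (mul_nonneg hm_pos.le (hN₀.1.nonneg e))
  have h_floor' := Nat.lt_floor_add_one (m * N₀ e)
  set a := ⌊m * N₀ e⌋₊
  obtain ⟨u', v', h'⟩ := hcomp.exists_isFrame hN₀.1 hπ he a <| by
    refine le_of_mul_le_mul_left ?_ hm_pos
    rwa [mul_left_comm, hπ_rank hN₀.1, mul_one]
  have ha : a * N π ≤ N e := by
    have h_le := hN.mul_le_left e (∑ i, u' i * v' i)
    rwa [h'.left_mul_sum, h'.map_sum hN, Finset.sum_const, Finset.card_fin, nsmul_eq_mul] at h_le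
  have hmε : 1 < m * ε := (div_lt_iff₀ hε).1 hm
  refine le_of_mul_le_mul_left ?_ hm_pos
  calc m * N₀ e ≤ a + m * ε := by linarith
    _ = m * (a * N π) + m * ε := by rw [mul_left_comm, hπ_rank hN, mul_one]
    _ ≤ m * (N e + ε) := by rw [mul_add]; gcongr

theorem RankComparable.eq_of_isPseudoRankFunction (hcomp : RankComparable N₀)
    (hN₀ : IsRankFunction N₀) (hsurj : RankSurjective N₀) (hR : VNRegular R)
    (hN : IsPseudoRankFunction N) : N = N₀ := by
  have h_idem : ∀ e : R, IsIdempotentElem e → N e = N₀ e := fun e he => by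
    have h_compl := hcomp.le_of_isIdempotentElem hN₀ hsurj hN he.one_sub
    rw [hN₀.1.map_one_sub he, hN.map_one_sub he] at h_compl
    linarith [hcomp.le_of_isIdempotentElem hN₀ hsurj hN he]
  funext x
  obtain ⟨y, hxyx, -⟩ := hR.exists_mul_mul_self x
  rw [← hN.map_mul_of_mul_mul_self hxyx, ← hN₀.1.map_mul_of_mul_mul_self hxyx]
  exact h_idem _ (by rw [IsIdempotentElem, ← mul_assoc, hxyx])

end Uniqueness

/-! ### Matrix units -/

section MatrixUnits

variable (K : Type*) {R ι T : Type*} [Field K] [Ring R] [Algebra K R]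

/-- The span of the products `u x * v y` over pairs of indices in the same block, the blocks
being the fibres of `τ`. If `u`, `v` form a frame whose base depends only on the block, these
products are a system of matrix units for a direct product of matrix algebras. -/
def blockSpan (τ : ι → T) (u v : ι → R) : Submodule K R :=
  Submodule.span K {z | ∃ x y, τ x = τ y ∧ u x * v y = z}

variable {K} in
theorem map_mem_of_mem_blockSpan {M : Type*} [AddCommGroup M] [Module K M] {τ : ι → T}
    {u v : ι → R} {z : R} (hz : z ∈ blockSpan K τ u v) (f : R →ₗ[K] M) {W : Submodule K M}
    (hW : ∀ x y, τ x = τ y → f (u x * v y) ∈ W) : f z ∈ W := by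
  suffices h_le : blockSpan K τ u v ≤ W.comap f from h_le hz
  refine Submodule.span_le.2 ?_
  rintro _ ⟨x, y, hxy, rfl⟩
  exact hW x y hxy

variable [Fintype ι] [DecidableEq ι] {π : R} {u v : ι → R}

/-- The algebra homomorphism sending the matrix units of `Matrix ι ι K` to the matrix units
`u i * v j` of a complete frame. -/
def frameHom (h : IsFrame (fun _ => π) 1 u v) (h_sum : ∑ i, u i * v i = 1) :
    Matrix ι ι K →ₐ[K] R :=
  AlgHom.ofLinearMap
    { toFun := fun z => ∑ i, ∑ j, z i j • (u i * v j)
      map_add' := fun x y => by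
        simp only [Matrix.add_apply, add_smul, Finset.sum_add_distrib]
      map_smul' := fun c x => by
        simp only [Matrix.smul_apply, Finset.smul_sum, smul_smul, smul_eq_mul, RingHom.id_apply] }
    (by simp [Matrix.one_apply, h_sum])
    (fun a b => by
      have v_mul : ∀ k, v k * ∑ i, ∑ j, b i j • (u i * v j) = ∑ j, b k j • v j := fun k => by
        simp only [Finset.mul_sum, mul_smul_comm, ← mul_assoc]
        rw [Fintype.sum_eq_single k fun i hi => by simp [h.v_mul_u_of_ne k i hi.symm]]
        simp only [h.v_mul_u, h.mul_v]
      simp only [LinearMap.coe_mk, AddHom.coe_mk, Finset.sum_mul, smul_mul_assoc, mul_assoc, v_mul]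
      refine Finset.sum_congr rfl fun i _ => ?_
      simp only [Matrix.mul_apply, Finset.smul_sum, Finset.sum_smul, mul_smul_comm, Finset.mul_sum,
        smul_smul]
      exact Finset.sum_comm)

variable {K} in
theorem frameHom_apply (h : IsFrame (fun _ => π) 1 u v) (h_sum : ∑ i, u i * v i = 1)
    (z : Matrix ι ι K) : frameHom K h h_sum z = ∑ i, ∑ j, z i j • (u i * v j) :=
  rfl

end MatrixUnits

/-! ### Matricial algebras -/

section Matrices

variable {K m n : Type*} [Field K]

theorem exists_rank_factorization [Fintype m] [Fintype n] (M : Matrix m n K) :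
    ∃ (r : ℕ) (A : Matrix m (Fin r) K) (A' : Matrix (Fin r) m K) (B : Matrix (Fin r) n K)
      (B' : Matrix n (Fin r) K), M.rank = r ∧ A * B = M ∧ A' * A = 1 ∧ B * B' = 1 := by
  classical
  let b : (LinearMap.range M.mulVecLin) ≃ₗ[K] (Fin M.rank → K) := (Module.finBasis K _).equivFun
  let f := (LinearMap.range M.mulVecLin).subtype ∘ₗ b.symm.toLinearMap
  let g := b.toLinearMap ∘ₗ M.mulVecLin.rangeRestrict
  have hf : LinearMap.ker f = ⊥ :=
    LinearMap.ker_eq_bot.2 (Subtype.val_injective.comp b.symm.injective)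
  have hg : LinearMap.range g = ⊤ :=
    LinearMap.range_eq_top.2 (b.surjective.comp M.mulVecLin.surjective_rangeRestrict)
  obtain ⟨f', hf'⟩ := f.exists_leftInverse_of_injective hf
  obtain ⟨g', hg'⟩ := g.exists_rightInverse_of_surjective hg
  have hfg : f ∘ₗ g = Matrix.toLin' M := by
    ext x
    simp [f, g]
  refine ⟨M.rank, LinearMap.toMatrix' f, LinearMap.toMatrix' f', LinearMap.toMatrix' g,
    LinearMap.toMatrix' g', rfl, ?_, ?_, ?_⟩
  · rw [← LinearMap.toMatrix'_comp, hfg, LinearMap.toMatrix'_toLin']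
  · rw [← LinearMap.toMatrix'_comp, hf', LinearMap.toMatrix'_id]
  · rw [← LinearMap.toMatrix'_comp, hg', LinearMap.toMatrix'_id]

theorem vnRegular_matrix [Fintype n] [DecidableEq n] : VNRegular (Matrix n n K) := fun M => by
  obtain ⟨r, A, A', B, B', -, rfl, hA, hB⟩ := exists_rank_factorization M
  refine ⟨B' * A', ?_⟩
  calc A * B = A * (B * B') * (A' * A) * B := by rw [hA, hB, Matrix.mul_one, Matrix.mul_one]
    _ = A * B * (B' * A') * (A * B) := by simp only [Matrix.mul_assoc]

theorem exists_mul_eq_of_isIdempotentElem_matrix [Fintype n] {F : Matrix n n K}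
    (hF : IsIdempotentElem F) :
    ∃ (r : ℕ) (A : Matrix n (Fin r) K) (B : Matrix (Fin r) n K), A * B = F ∧ B * A = 1 := by
  obtain ⟨r, A, A', B, B', -, hAB, hA, hB⟩ := exists_rank_factorization F
  refine ⟨r, A, B, hAB, ?_⟩
  calc B * A = (A' * A) * (B * A) * (B * B') := by rw [hA, hB, Matrix.one_mul, Matrix.mul_one]
    _ = A' * (A * B * (A * B)) * B' := by simp only [Matrix.mul_assoc]
    _ = (A' * A) * (B * B') := by rw [hAB, hF.eq, ← hAB]; simp only [Matrix.mul_assoc]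
    _ = 1 := by rw [hA, hB, Matrix.mul_one]

section Frame

variable [Fintype m] [Fintype n] [DecidableEq m] [DecidableEq n] (z : n)

theorem isFrame_mul_single {A : Matrix n m K} {B : Matrix m n K} (hBA : B * A = 1) :
    IsFrame (fun _ : m => (Matrix.single z z 1 : Matrix n n K)) (A * B)
      (fun i => A * (Matrix.single i z 1 : Matrix m n K))
      fun i => (Matrix.single z i 1 : Matrix n m K) * B := by
  have v_mul_u : ∀ i j : m, (Matrix.single z i 1 : Matrix n m K) * B *
      (A * (Matrix.single j z 1 : Matrix m n K)) =
        (Matrix.single z i 1 : Matrix n m K) * (Matrix.single j z 1 : Matrix m n K) :=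
    fun i j => by rw [Matrix.mul_assoc, ← Matrix.mul_assoc B, hBA, Matrix.one_mul]
  refine ⟨fun i => ?_, fun i j hij => ?_, fun i => ?_, fun i => ?_, fun i => ?_, fun i => ?_⟩
  · rw [v_mul_u, Matrix.single_mul_single_same, one_mul]
  · rw [v_mul_u, Matrix.single_mul_single_of_ne _ _ _ _ hij]
  · rw [Matrix.mul_assoc, Matrix.single_mul_single_same, one_mul]
  · rw [← Matrix.mul_assoc, Matrix.single_mul_single_same, one_mul]
  · rw [Matrix.mul_assoc, ← Matrix.mul_assoc B, hBA, Matrix.one_mul]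
  · rw [Matrix.mul_assoc, ← Matrix.mul_assoc B, hBA, Matrix.one_mul]

theorem mul_single_mul (A : Matrix n m K) (B : Matrix m n K) (i j : m) (c : K) :
    A * (Matrix.single i j c : Matrix m m K) * B =
      c • (A * (Matrix.single i z 1 : Matrix m n K) *
        ((Matrix.single z j 1 : Matrix n m K) * B)) := by
  rw [Matrix.mul_assoc A (Matrix.single i z 1), ← Matrix.mul_assoc (Matrix.single i z 1),
    Matrix.single_mul_single_same, ← Matrix.mul_assoc, ← Matrix.smul_mul, ← Matrix.mul_smul,
    Matrix.smul_single, smul_eq_mul, one_mul, mul_one]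

theorem sum_mul_single_mul (A : Matrix n m K) (B : Matrix m n K) :
    ∑ i, A * (Matrix.single i z 1 : Matrix m n K) * ((Matrix.single z i 1 : Matrix n m K) * B) =
      A * B := by
  have h_single : ∀ i, A * (Matrix.single i z 1 : Matrix m n K) *
      ((Matrix.single z i 1 : Matrix n m K) * B) = A * (Matrix.single i i 1 : Matrix m m K) * B :=
    fun i => by rw [mul_single_mul z, one_smul]
  rw [Finset.sum_congr rfl fun i _ => h_single i, ← Matrix.sum_mul, ← Matrix.mul_sum,
    Matrix.sum_single_one, Matrix.mul_one]

theorem mul_mul_mem_blockSpan (A : Matrix n m K) (B : Matrix m n K) (M : Matrix m m K) :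
    A * M * B ∈ blockSpan K (fun _ => ()) (fun i => A * (Matrix.single i z 1 : Matrix m n K))
      fun i => (Matrix.single z i 1 : Matrix n m K) * B := by
  rw [Matrix.matrix_eq_sum_single M]
  simp only [Matrix.mul_sum, Matrix.sum_mul, mul_single_mul z A B]
  exact Submodule.sum_mem _ fun i _ => Submodule.sum_mem _ fun j _ =>
    Submodule.smul_mem _ _ (Submodule.subset_span ⟨i, j, rfl, rfl⟩)

theorem IsPseudoRankFunction.map_matrix {N : Matrix n n K → ℝ} (hN : IsPseudoRankFunction N)
    (M : Matrix n n K) : N M = M.rank / Fintype.card n := by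
  cases isEmpty_or_nonempty n with
  | inl _ => simp [Subsingleton.elim M 0, hN.map_zero]
  | inr h_nonempty =>
    obtain ⟨z⟩ := h_nonempty
    obtain ⟨r, A, A', B, B', hr, hAB, hA, hB⟩ := exists_rank_factorization M
    have h_idem : M * (B' * A') = A * A' := by
      rw [← hAB, Matrix.mul_assoc, ← Matrix.mul_assoc B, hB, Matrix.one_mul]
    have h_mul : M * (B' * A') * M = M := by
      rw [h_idem, ← hAB, Matrix.mul_assoc, ← Matrix.mul_assoc A', hA, Matrix.one_mul]
    have h_single : N (Matrix.single z z 1) = 1 / Fintype.card n := by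
      have h_frame := isFrame_mul_single z (Matrix.one_mul (1 : Matrix n n K))
      rw [Matrix.one_mul] at h_frame
      exact h_frame.map_eq_one_div_card
        ((sum_mul_single_mul z 1 1).trans (Matrix.one_mul 1)) hN
    calc N M = N (A * A') := by rw [← h_idem, hN.map_mul_of_mul_mul_self h_mul]
      _ = ∑ _ : Fin r, N (Matrix.single z z 1) := by
        rw [← (isFrame_mul_single z hA).map_sum hN, sum_mul_single_mul]
      _ = M.rank / Fintype.card n := by simp [h_single, hr, div_eq_mul_inv]

theorem exists_isFrame_matrix [Nonempty n] {F : Matrix n n K} (hF : IsIdempotentElem F) :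
    ∃ (r : ℕ) (π : Matrix n n K) (u v : Fin r → Matrix n n K), IsFrame (fun _ => π) F u v ∧
      ∑ i, u i * v i = F ∧ ∀ M, F * M * F ∈ blockSpan K (fun _ => ()) u v := by
  obtain ⟨z⟩ := ‹Nonempty n›
  obtain ⟨r, A, B, rfl, hBA⟩ := exists_mul_eq_of_isIdempotentElem_matrix hF
  refine ⟨r, _, _, _, isFrame_mul_single z hBA, sum_mul_single_mul z A B, fun M => ?_⟩
  have h_corner : A * B * M * (A * B) = A * (B * M * A) * B := by simp only [Matrix.mul_assoc]
  rw [h_corner]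
  exact mul_mul_mem_blockSpan z A B _

end Frame

end Matrices

section Pi

variable {K : Type*} [Field K] {T : Type*} {ι : T → Type*} {R : T → Type*} [DecidableEq T]
  [∀ t, Ring (R t)] [∀ t, Algebra K (R t)]

theorem IsFrame.pi {π : ∀ t, R t} {e : ∀ t, R t} {u v : ∀ t, ι t → R t}
    (h : ∀ t, IsFrame (fun _ => π t) (e t) (u t) (v t)) :
    IsFrame (fun x : Σ t, ι t => Pi.single x.1 (π x.1)) e (fun x => Pi.single x.1 (u x.1 x.2))
      fun x => Pi.single x.1 (v x.1 x.2) where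
  v_mul_u x := by rw [← Pi.single_mul, (h x.1).v_mul_u]
  v_mul_u_of_ne := fun ⟨t, i⟩ ⟨s, j⟩ hne => by
    by_cases hts : t = s
    · subst hts
      rw [← Pi.single_mul, (h t).v_mul_u_of_ne i j fun hij => hne (hij ▸ rfl), Pi.single_zero]
    · rw [← Pi.single_mul_left, Pi.single_eq_of_ne hts, mul_zero, Pi.single_zero]
  u_mul x := by rw [← Pi.single_mul, (h x.1).u_mul]
  mul_v x := by rw [← Pi.single_mul, (h x.1).mul_v]
  left_mul x := by rw [← Pi.single_mul_right, (h x.1).left_mul]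
  mul_right x := by rw [← Pi.single_mul_left, (h x.1).mul_right]

theorem single_mem_blockSpan {u v : ∀ t, ι t → R t} {t : T} {z : R t}
    (hz : z ∈ blockSpan K (fun _ => ()) (u t) (v t)) :
    (Pi.single t z : ∀ t, R t) ∈ blockSpan K (Sigma.fst : (Σ t, ι t) → T)
      (fun x => Pi.single x.1 (u x.1 x.2)) fun x => Pi.single x.1 (v x.1 x.2) := by
  exact map_mem_of_mem_blockSpan hz (LinearMap.single K R t) fun i j _ =>
    Submodule.subset_span ⟨⟨t, i⟩, ⟨t, j⟩, rfl, (Pi.single_mul t _ _).symm⟩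

end Pi

section Matricial

variable {K : Type*} [Field K] {A Q : Type*} [Ring A] [Algebra K A] [Ring Q] [Algebra K Q]

theorem IsMatricialAlgebra.vnRegular (hA : IsMatricialAlgebra K A) : VNRegular A := by
  obtain ⟨k, n, -, ⟨φ⟩⟩ := hA
  intro x
  choose y hy using fun i => vnRegular_matrix (φ x i)
  refine ⟨φ.symm y, φ.injective ?_⟩
  rw [map_mul, map_mul, φ.apply_symm_apply]
  exact funext hy

theorem exists_isFrame_pi_matrix {k : ℕ} {n : Fin k → ℕ} (hn : ∀ t, 0 < n t)
    {F : ∀ t, Matrix (Fin (n t)) (Fin (n t)) K} (hF : IsIdempotentElem F) :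
    ∃ (r : Fin k → ℕ) (π : Fin k → ∀ t, Matrix (Fin (n t)) (Fin (n t)) K)
      (u v : (Σ t, Fin (r t)) → ∀ t, Matrix (Fin (n t)) (Fin (n t)) K),
      IsFrame (fun x => π x.1) F u v ∧ ∑ x, u x * v x = F ∧
        ∀ M, F * M * F ∈ blockSpan K Sigma.fst u v := by
  have : ∀ t, Nonempty (Fin (n t)) := fun t => ⟨⟨0, hn t⟩⟩
  choose r π u v h h_sum h_corner using fun t =>
    exists_isFrame_matrix (F := F t) (congrFun hF.eq t)
  refine ⟨r, fun t => Pi.single t (π t), _, _, .pi h, ?_, fun M => ?_⟩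
  · simp only [← Pi.single_mul, Fintype.sum_sigma]
    rw [← Finset.univ_sum_single F]
    exact Finset.sum_congr rfl fun t _ => by
      rw [← h_sum t]
      exact (map_sum (LinearMap.single K _ t) _ _).symm
  · rw [← Finset.univ_sum_single (F * M * F)]
    exact Submodule.sum_mem _ fun t _ => single_mem_blockSpan (h_corner t (M t))

theorem exists_isFrame_of_mem_isMatricialAlgebra {D : Subalgebra K Q}
    (hD : IsMatricialAlgebra K D) {f : Q} (hfD : f ∈ D) (hf : IsIdempotentElem f) :
    ∃ (k : ℕ) (r : Fin k → ℕ) (π : Fin k → Q) (u v : (Σ t, Fin (r t)) → Q),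
      IsFrame (fun x => π x.1) f u v ∧ ∑ x, u x * v x = f ∧
        ∀ d ∈ D, f * d * f ∈ blockSpan K Sigma.fst u v := by
  obtain ⟨k, n, hn, ⟨φ⟩⟩ := hD
  let Φ : (∀ t, Matrix (Fin (n t)) (Fin (n t)) K) →ₐ[K] Q := D.val.comp φ.symm.toAlgHom
  have hΦ : ∀ d (hd : d ∈ D), Φ (φ ⟨d, hd⟩) = d := fun d hd => by simp [Φ]
  obtain ⟨r, π, u, v, h, h_sum, h_corner⟩ := exists_isFrame_pi_matrix hn
    (F := φ ⟨f, hfD⟩) (by rw [IsIdempotentElem, ← map_mul]; exact congrArg φ (Subtype.ext hf))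
  refine ⟨k + 1, r, fun t => Φ (π t), _, _, hΦ f hfD ▸ h.map Φ, ?_, fun d hd => ?_⟩
  · simp only [← map_mul, ← map_sum, h_sum, hΦ]
  · have h_eq : Φ.toLinearMap (φ ⟨f, hfD⟩ * φ ⟨d, hd⟩ * φ ⟨f, hfD⟩) = f * d * f := by simp [hΦ]
    rw [← h_eq]
    exact map_mem_of_mem_blockSpan (h_corner _) Φ.toLinearMap fun x y hxy =>
      Submodule.subset_span ⟨x, y, hxy, (map_mul Φ _ _).symm⟩

section Range

variable {T : Type*} {n : T → ℕ}

theorem map_single_eq_zero_iff [DecidableEq T] [∀ t, NeZero (n t)]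
    (φ : (∀ t, Matrix (Fin (n t)) (Fin (n t)) K) →ₐ[K] Q) {t : T} (ht : φ (Pi.single t 1) ≠ 0)
    {M : Matrix (Fin (n t)) (Fin (n t)) K} : φ (Pi.single t M) = 0 ↔ M = 0 := by
  let ψ : Matrix (Fin (n t)) (Fin (n t)) K →ₙ+* Q :=
    { toFun := fun M => φ (Pi.single t M)
      map_mul' := fun M M' => by rw [Pi.single_mul, map_mul]
      map_zero' := by rw [Pi.single_zero, map_zero]
      map_add' := fun M M' => by rw [Pi.single_add, map_add] }
  refine ⟨fun hM => by_contra fun hM_ne => ht ?_, fun hM => by rw [hM, Pi.single_zero, map_zero]⟩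
  exact (TwoSidedIdeal.mem_ker ψ).1 <|
    IsSimpleRing.one_mem_of_ne_zero_mem _ hM_ne ((TwoSidedIdeal.mem_ker ψ).2 hM)

theorem map_pi_matrix_eq_zero_iff [DecidableEq T] [Finite T] [∀ t, NeZero (n t)]
    (φ : (∀ t, Matrix (Fin (n t)) (Fin (n t)) K) →ₐ[K] Q)
    {M : ∀ t, Matrix (Fin (n t)) (Fin (n t)) K} :
    φ M = 0 ↔ ∀ t, φ (Pi.single t 1) ≠ 0 → M t = 0 := by
  refine ⟨fun hM t ht => (map_single_eq_zero_iff φ ht).1 ?_, fun hM => ?_⟩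
  · rw [← mul_one (M t), Pi.single_mul_right, map_mul, hM, zero_mul]
  · have := Fintype.ofFinite T
    rw [← Finset.univ_sum_single M, map_sum]
    refine Finset.sum_eq_zero fun t _ => ?_
    by_cases ht : φ (Pi.single t 1) = 0
    · rw [← mul_one (M t), Pi.single_mul, map_mul, ht, mul_zero]
    · rw [hM t ht, Pi.single_zero, map_zero]

theorem isMatricialAlgebra_pi [Finite T] [Nonempty T] (hn : ∀ t, 0 < n t) :
    IsMatricialAlgebra K (∀ t, Matrix (Fin (n t)) (Fin (n t)) K) := by
  obtain ⟨k, hk⟩ := Nat.exists_eq_succ_of_ne_zero (Nat.card_pos (α := T)).ne'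
  let e : T ≃ Fin (k + 1) := Finite.equivFinOfCardEq hk
  exact ⟨k, fun j => n (e.symm j), fun j => hn _, ⟨AlgEquiv.piCongrLeft' K _ e⟩⟩

theorem isMatricialAlgebra_range_of_pi [Finite T] [Nontrivial Q] [∀ t, NeZero (n t)]
    (φ : (∀ t, Matrix (Fin (n t)) (Fin (n t)) K) →ₐ[K] Q) : IsMatricialAlgebra K φ.range := by
  classical
  let S := {t : T // φ (Pi.single t 1) ≠ 0}
  let ρ : (∀ t, Matrix (Fin (n t)) (Fin (n t)) K) →ₐ[K]
      ∀ t : S, Matrix (Fin (n t)) (Fin (n t)) K :=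
    AlgHom.pi fun t => Pi.evalAlgHom K _ t.1
  have hρ : Function.Surjective ρ := fun M =>
    ⟨fun t => if ht : φ (Pi.single t 1) ≠ 0 then M ⟨t, ht⟩ else 0, funext fun t => dif_pos t.2⟩
  have h_ker : RingHom.ker ρ = RingHom.ker φ.rangeRestrict := by
    ext M
    rw [RingHom.mem_ker, AlgHom.ker_rangeRestrict, RingHom.mem_ker, map_pi_matrix_eq_zero_iff φ,
      funext_iff, Subtype.forall]
    rfl
  have : Nonempty S := by
    by_contra h_empty
    rw [not_nonempty_iff, isEmpty_subtype] at h_empty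
    exact one_ne_zero <| (map_one φ).symm.trans <|
      (map_pi_matrix_eq_zero_iff φ).2 fun t ht => (h_empty t ht).elim
  obtain ⟨k, m, hm, ⟨θ⟩⟩ := isMatricialAlgebra_pi (K := K) (T := S) (n := fun t => n t)
    fun t => NeZero.pos _
  exact ⟨k, m, hm, ⟨(Ideal.quotientKerAlgEquivOfSurjective φ.rangeRestrict_surjective).symm.trans <|
    (Ideal.quotientEquivAlgOfEq K h_ker.symm).trans <|
      (Ideal.quotientKerAlgEquivOfSurjective hρ).trans θ⟩⟩

end Range

theorem IsMatricialAlgebra.range [Nontrivial Q] (hA : IsMatricialAlgebra K A) (φ : A →ₐ[K] Q) :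
    IsMatricialAlgebra K φ.range := by
  obtain ⟨k, n, hn, ⟨θ⟩⟩ := hA
  have : ∀ t, NeZero (n t) := fun t => ⟨(hn t).ne'⟩
  have h_range : (φ.comp θ.symm.toAlgHom).range = φ.range := by
    rw [AlgHom.range_comp, (AlgHom.range_eq_top _).2 θ.symm.surjective, Algebra.map_top]
  exact h_range ▸ isMatricialAlgebra_range_of_pi (φ.comp θ.symm.toAlgHom)

end Matricial

/-! ### Idempotents close to each other -/

section NearbyIdempotents

variable {R : Type*} [Ring R] {N : R → ℝ}

theorem VNRegular.exists_isIdempotentElem_sub_eq (hR : VNRegular R) (x : R) :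
    ∃ f c : R, IsIdempotentElem f ∧ f - x = c * (x * x - x) := by
  obtain ⟨y, hy, -⟩ := hR.exists_mul_mul_self (x * x - x)
  set q := 1 - y * (x * x - x) with hq
  have hxq : x * (x * q) = x * q := by
    rw [← sub_eq_zero, ← mul_assoc, ← sub_mul, hq, mul_sub, mul_one, ← mul_assoc, hy, sub_self]
  obtain ⟨w, hw, -⟩ := hR.exists_mul_mul_self (x * q)
  refine ⟨x * q * w * x, (x * q * w * x - x) * y, ?_, ?_⟩
  · calc x * q * w * x * (x * q * w * x) = x * q * w * (x * (x * q)) * w * x := by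
          simp only [mul_assoc]
      _ = x * q * w * x := by rw [hxq, hw]
  · have h_zero : (x * q * w * x - x) * q = 0 := by rw [sub_mul, mul_assoc _ x q, hw, sub_self]
    rwa [hq, mul_sub, mul_one, ← mul_assoc, sub_eq_zero] at h_zero

theorem IsPseudoRankFunction.map_mul_self_sub_le (hN : IsPseudoRankFunction N) {e : R}
    (he : IsIdempotentElem e) (x : R) : N (x * x - x) ≤ 3 * N (e - x) := by
  have h_eq : x * x - x = (x - e) * x + e * (x - e) + (e - x) := by
    simp only [sub_mul, mul_sub, he.eq]; abel
  calc N (x * x - x) ≤ N ((x - e) * x) + N (e * (x - e)) + N (e - x) := by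
        rw [h_eq]
        exact (hN.subadditive _ _).trans (by gcongr; exact hN.subadditive _ _)
    _ ≤ N (x - e) + N (x - e) + N (e - x) := by
        gcongr
        exacts [hN.mul_le_left _ _, hN.mul_le_right _ _]
    _ = 3 * N (e - x) := by rw [hN.map_sub_rev x e]; ring

theorem IsPseudoRankFunction.exists_isIdempotentElem_mem_near {K : Type*} [Field K] [Algebra K R]
    (hN : IsPseudoRankFunction N) {D : Subalgebra K R} (hD : VNRegular D) {e x : R}
    (he : IsIdempotentElem e) (hx : x ∈ D) :
    ∃ f ∈ D, IsIdempotentElem f ∧ N (e - f) ≤ 4 * N (e - x) := by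
  obtain ⟨⟨f, hfD⟩, ⟨c, hcD⟩, hf, h_eq⟩ := hD.exists_isIdempotentElem_sub_eq ⟨x, hx⟩
  replace h_eq : f - x = c * (x * x - x) := congrArg Subtype.val h_eq
  have h_le : N (x - f) ≤ 3 * N (e - x) := by
    rw [hN.map_sub_rev, h_eq]
    exact (hN.mul_le_right _ _).trans (hN.map_mul_self_sub_le he x)
  exact ⟨f, hfD, congrArg Subtype.val hf, by linarith [hN.sub_le_sub_add_sub e x f]⟩

theorem RankComparable.exists_isPartialIso_extending_mul (hcomp : RankComparable N)
    (hN : IsPseudoRankFunction N) (hR : VNRegular R) {e f : R} (he : IsIdempotentElem e)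
    (hf : IsIdempotentElem f) (hle : N f ≤ N e) :
    ∃ s s' : R, IsPartialIso e f s s' ∧ s' * s = f ∧ N (s - e * f) ≤ N (e - f) := by
  obtain ⟨y, h⟩ := hR.exists_isPartialIso he hf (x := e * f) (by rw [← mul_assoc, he.eq])
    (by rw [mul_assoc, hf.eq])
  have h_rank : N (f - y * (e * f)) ≤ N (e - e * f * y) := by
    rw [h.map_sub_mul hN he, h.symm.map_sub_mul hN hf, ← h.map_mul' hN, h.symm.map_mul hN]
    linarith
  obtain ⟨u, v, huv, huv_eq⟩ := hcomp _ _ (h.symm.isIdempotentElem_sub_mul hf)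
    (h.isIdempotentElem_sub_mul he) h_rank
  obtain ⟨h_add, h_add_eq⟩ := h.symm.add huv
  refine ⟨e * f + v, y + u, h_add.symm, by rw [h_add_eq, huv_eq, add_sub_cancel], ?_⟩
  have h_kill : e * (f - y * (e * f)) = 0 := by
    rw [mul_sub, ← h.left_mul', mul_assoc f, ← mul_assoc e, ← mul_assoc (e * f), h.mul_mul_self,
      sub_self]
  have h_eq : f - y * (e * f) = (f - e) * (f - y * (e * f)) := by
    rw [sub_mul, h_kill, sub_zero, mul_sub, hf.eq, h.symm.left_mul_mul]
  calc N (e * f + v - e * f) = N (v * (f - y * (e * f))) := by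
        rw [add_sub_cancel_left, huv.mul_right']
    _ ≤ N (f - y * (e * f)) := hN.mul_le_right _ _
    _ ≤ N (f - e) := by rw [h_eq]; exact hN.mul_le_left _ _
    _ = N (e - f) := hN.map_sub_rev f e

theorem RankComparable.exists_isPartialIso_near (hcomp : RankComparable N)
    (hN : IsPseudoRankFunction N) (hR : VNRegular R) {e f : R} (he : IsIdempotentElem e)
    (hf : IsIdempotentElem f) (hle : N f ≤ N e) :
    ∃ s s' : R, IsPartialIso e f s s' ∧ s' * s = f ∧ N (e - s) ≤ 3 * N (e - f) ∧
      N (e - s') ≤ 4 * N (e - f) := by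
  obtain ⟨s, s', h, h_eq, h_near⟩ := hcomp.exists_isPartialIso_extending_mul hN hR he hf hle
  have h_ef : N (f - e * f) ≤ N (e - f) := by
    calc N (f - e * f) = N ((f - e) * f) := by rw [sub_mul, hf.eq]
      _ ≤ N (f - e) := hN.mul_le_left _ _
      _ = N (e - f) := hN.map_sub_rev f e
  have h_fs : N (f - s) ≤ 2 * N (e - f) := by
    linarith [hN.sub_le_sub_add_sub f (e * f) s, hN.map_sub_rev s (e * f)]
  have h_fs' : N (f - s' * f) ≤ 2 * N (e - f) := by
    calc N (f - s' * f) = N (s' * (s - f)) := by rw [mul_sub, h_eq]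
      _ ≤ N (s - f) := hN.mul_le_right _ _
      _ ≤ 2 * N (e - f) := hN.map_sub_rev s f ▸ h_fs
  have h_s's' : N (s' * f - s') ≤ N (e - f) := by
    calc N (s' * f - s') = N (s' * (f - e)) := by rw [mul_sub, h.mul_right']
      _ ≤ N (f - e) := hN.mul_le_right _ _
      _ = N (e - f) := hN.map_sub_rev f e
  refine ⟨s, s', h, h_eq, ?_, ?_⟩
  · linarith [hN.sub_le_sub_add_sub e f s]
  · linarith [hN.sub_le_sub_add_sub f (s' * f) s', hN.sub_le_sub_add_sub e f s']

end NearbyIdempotents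

/-! ### Dyadic approximation of weights -/

section Dyadic

theorem exists_scaling {w η F : ℝ} (hw : 0 < w) (hη : 0 ≤ η) (hF : F ≤ w + η) :
    ∃ l ∈ Set.Icc (0 : ℝ) 1, l * F ≤ w ∧ F - l * F ≤ η := by
  have h_pos : 0 < w + η := by positivity
  have h_mul : w / (w + η) * (w + η) = w := div_mul_cancel₀ w h_pos.ne'
  have hl : w / (w + η) ≤ 1 := (div_le_one h_pos).2 (by linarith)
  refine ⟨w / (w + η), ⟨by positivity, hl⟩, ?_, ?_⟩
  · calc w / (w + η) * F ≤ w / (w + η) * (w + η) := by gcongr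
      _ = w := h_mul
  · calc F - w / (w + η) * F = (1 - w / (w + η)) * F := by ring
      _ ≤ (1 - w / (w + η)) * (w + η) := by gcongr
      _ = η := by rw [sub_mul, h_mul]; ring

theorem exists_one_le_div_two_pow_le {c : ℝ} (hc : 0 ≤ c) (n : ℕ) {δ : ℝ} (hδ : 0 < δ) :
    ∃ k : ℕ, 1 ≤ k ∧ c / 2 ^ (n + k) ≤ δ := by
  obtain ⟨k, hk⟩ := pow_unbounded_of_one_lt (c / δ + 1) (one_lt_two (α := ℝ))
  refine ⟨k, Nat.one_le_iff_ne_zero.2 fun h => ?_, ?_⟩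
  · have : 0 ≤ c / δ := by positivity
    rw [h, pow_zero] at hk
    linarith
  · have h_pow : (2 : ℝ) ^ k ≤ 2 ^ (n + k) := pow_le_pow_right₀ one_le_two (by omega)
    rw [div_le_iff₀ (by positivity), mul_comm, ← div_le_iff₀ hδ]
    linarith

variable {T : Type*} [Fintype T]

theorem exists_floor_weights (r : T → ℕ) {ρ : T → ℝ} (hρ : ∀ t, 0 ≤ ρ t) {P : ℝ} (hP : 0 < P) :
    ∃ a : T → ℕ, (∀ t, a t / P ≤ ρ t) ∧
      ∑ t, r t * ρ t - (∑ t, r t * a t : ℕ) / P ≤ (∑ t, r t : ℕ) / P := by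
  refine ⟨fun t => ⌊ρ t * P⌋₊, fun t => ?_, ?_⟩
  · rw [div_le_iff₀ hP]
    exact Nat.floor_le (mul_nonneg (hρ t) hP.le)
  · rw [sub_le_iff_le_add, ← add_div, le_div_iff₀ hP]
    push_cast
    rw [Finset.sum_mul, ← Finset.sum_add_distrib]
    gcongr with t
    calc r t * ρ t * P = r t * (ρ t * P) := mul_assoc _ _ _
      _ ≤ r t * (⌊ρ t * P⌋₊ + 1) := by gcongr; exact (Nat.lt_floor_add_one _).le
      _ = r t + r t * ⌊ρ t * P⌋₊ := by ring

theorem exists_dyadic_weights (r : T → ℕ) {ρ : T → ℝ} (hρ : ∀ t, 0 ≤ ρ t) (n : ℕ) {η δ : ℝ}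
    (hη : 0 ≤ η) (hδ : 0 < δ) (h_sum : ∑ t, r t * ρ t ≤ 1 / 2 ^ n + η) :
    ∃ (k : ℕ) (a : T → ℕ), 1 ≤ k ∧ (∀ t, a t * (1 / 2 ^ (n + k) : ℝ) ≤ ρ t) ∧
      ∑ t, r t * a t ≤ 2 ^ k ∧
      ∑ t, r t * ρ t - (∑ t, r t * a t : ℕ) * (1 / 2 ^ (n + k) : ℝ) ≤ η + δ := by
  obtain ⟨l, ⟨hl₀, hl₁⟩, hl_le, hl_near⟩ := exists_scaling (w := 1 / 2 ^ n) (by positivity) hη h_sum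
  obtain ⟨k, hk₁, h_small⟩ :=
    exists_one_le_div_two_pow_le (c := (∑ t, r t : ℕ)) (by positivity) n hδ
  obtain ⟨a, ha, ha_sum⟩ := exists_floor_weights r (fun t => mul_nonneg hl₀ (hρ t))
    (P := 2 ^ (n + k)) (by positivity)
  have h_mul_sum : ∑ t, r t * (l * ρ t) = l * ∑ t, r t * ρ t := by
    rw [Finset.mul_sum]
    exact Finset.sum_congr rfl fun t _ => by ring
  have h_le : ((∑ t, r t * a t : ℕ) : ℝ) / 2 ^ (n + k) ≤ 1 / 2 ^ n := by
    refine le_trans ?_ hl_le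
    rw [← h_mul_sum, Nat.cast_sum, Finset.sum_div]
    gcongr with t
    rw [Nat.cast_mul, mul_div_assoc]
    gcongr
    exact ha t
  rw [h_mul_sum] at ha_sum
  refine ⟨k, a, hk₁, fun t => ?_, ?_, by rw [mul_one_div]; linarith⟩
  · rw [mul_one_div]
    exact (ha t).trans (mul_le_of_le_one_left (hρ t) hl₁)
  · rw [pow_add, div_le_div_iff₀ (by positivity) (by positivity), one_mul,
      mul_comm, mul_le_mul_iff_right₀ (by positivity)] at h_le
    exact_mod_cast h_le

end Dyadic

/-! ### Approximation in corners -/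

section Corner

variable {K Q : Type*} [Field K] [Ring Q] [Algebra K Q] {N : Q → ℝ}

variable (K) in
/-- Finitely many elements of `Q` can be approximated simultaneously, in the rank metric, by
elements of a matricial subalgebra. -/
def LocallyMatricial (N : Q → ℝ) : Prop :=
  ∀ ε : ℝ, 0 < ε → ∀ (n : ℕ) (x : Fin n → Q),
    ∃ A : Subalgebra K Q, IsMatricialAlgebra K A ∧
      ∃ y : Fin n → Q, (∀ i, y i ∈ A) ∧ ∀ i, N (x i - y i) < ε

theorem LocallyMatricial.exists_isFrame_near (hloc : LocallyMatricial K N)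
    (hN : IsPseudoRankFunction N) {e : Q} (he : IsIdempotentElem e) {ι : Type*} [Finite ι]
    (x : ι → Q) {δ : ℝ} (hδ : 0 < δ) :
    ∃ (k : ℕ) (r : Fin k → ℕ) (γ : Fin k → Q) (f : Q) (α β : (Σ t, Fin (r t)) → Q),
      IsFrame (fun x => γ x.1) f α β ∧ ∑ x, α x * β x = f ∧ N (e - f) ≤ 4 * δ ∧
        ∀ i, ∃ y, N (x i - y) < δ ∧ f * y * f ∈ blockSpan K Sigma.fst α β := by
  let E := Finite.equivFin ι
  obtain ⟨D, hD, y, hyD, hy⟩ := hloc δ hδ (Nat.card ι + 1) (Fin.cons e (x ∘ E.symm))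
  obtain ⟨f, hfD, hf, hef⟩ := hN.exists_isIdempotentElem_mem_near hD.vnRegular he (hyD 0)
  obtain ⟨k, r, γ, α, β, h, h_sum, h_corner⟩ :=
    exists_isFrame_of_mem_isMatricialAlgebra hD hfD hf
  have hy₀ : N (e - y 0) < δ := hy 0
  exact ⟨k, r, γ, f, α, β, h, h_sum, by linarith,
    fun i => ⟨y (E i).succ, by simpa using hy (E i).succ, h_corner _ (hyD _)⟩⟩

theorem IsFrame.sum_sigma_mul {R ι : Type*} [Ring R] {κ : ι → Type*} [Fintype ι]
    [∀ i, Fintype (κ i)] {π : ι → R} {e : R} {u v : ι → R} {ρ u' v' : ∀ i, κ i → R}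
    (h : IsFrame π e u v) (h' : ∀ i, IsFrame (ρ i) (π i) (u' i) (v' i)) (i : ι) :
    (∑ x : Σ i, κ i, u x.1 * u' x.1 x.2 * (v' x.1 x.2 * v x.1)) * u i =
      ∑ c, u i * u' i c * v' i c := by
  rw [Finset.sum_mul, Fintype.sum_sigma, Fintype.sum_eq_single i fun j hj => ?_]
  · simp only [mul_assoc, h.v_mul_u, (h' i).mul_right]
  · simp only [mul_assoc, h.v_mul_u_of_ne j i hj, mul_zero, Finset.sum_const_zero]

theorem RankComparable.exists_isFrame_sigma (hcomp : RankComparable N)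
    (hN : IsPseudoRankFunction N) {T : Type*} {r a : T → ℕ} {γ : T → Q} {f π : Q}
    {α β : (Σ t, Fin (r t)) → Q} (h : IsFrame (fun x => γ x.1) f α β) (hπ : IsIdempotentElem π)
    (ha : ∀ t, a t * N π ≤ N (γ t)) :
    ∃ U V : ∀ t, Fin (a t) → Q, ∀ x : Σ t, Fin (r t),
      IsFrame (fun _ => π) (γ x.1) (U x.1) (V x.1) := by
  have h_frame : ∀ t, ∃ U V : Fin (a t) → Q, 0 < r t → IsFrame (fun _ => π) (γ t) U V := by
    intro t
    rcases Nat.eq_zero_or_pos (r t) with hr | hr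
    · exact ⟨0, 0, fun hr' => (hr'.ne' hr).elim⟩
    · have hγ : IsIdempotentElem (γ t) := by
        have h_iso := (h.isPartialIso ⟨t, ⟨0, hr⟩⟩).symm.isIdempotentElem_mul
        rwa [h.v_mul_u] at h_iso
      obtain ⟨U, V, hUV⟩ := hcomp.exists_isFrame hN hπ hγ (a t) (ha t)
      exact ⟨U, V, fun _ => hUV⟩
  choose U V hUV using h_frame
  exact ⟨U, V, fun x => hUV x.1 x.2.pos⟩

theorem IsFrame.mul_mul_mem_blockSpan_sigma {T : Type*} [Fintype T] {r a : T → ℕ} {γ : T → Q}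
    {f π : Q} {α β : (Σ t, Fin (r t)) → Q} (h : IsFrame (fun x => γ x.1) f α β)
    {U V : ∀ t, Fin (a t) → Q}
    (hUV : ∀ x : Σ t, Fin (r t), IsFrame (fun _ => π) (γ x.1) (U x.1) (V x.1)) {g : Q}
    (hg : ∑ x : Σ x : (Σ t, Fin (r t)), Fin (a x.1),
      α x.1 * U x.1.1 x.2 * (V x.1.1 x.2 * β x.1) = g)
    {z : Q} (hz : f * z * f ∈ blockSpan K Sigma.fst α β) :
    g * z * g ∈ blockSpan K (fun _ => ())
      (fun x : Σ x : (Σ t, Fin (r t)), Fin (a x.1) => α x.1 * U x.1.1 x.2)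
      fun x => V x.1.1 x.2 * β x.1 := by
  have h_sigma := h.sigma hUV
  have h_eq : LinearMap.mulLeftRight K (g, g) (f * z * f) = g * z * g := by
    have hgf := h_sigma.sum_mul_right
    have hfg := h_sigma.left_mul_sum
    rw [hg] at hgf hfg
    simp only [LinearMap.mulLeftRight_apply, mul_assoc, hfg]
    rw [mul_mul_of_mul_eq hgf]
  rw [← h_eq]
  refine map_mem_of_mem_blockSpan hz _ ?_
  rintro ⟨t, i⟩ ⟨t', j⟩ (rfl : t = t')
  have h_unit : g * (α ⟨t, i⟩ * β ⟨t, j⟩) * g =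
      ∑ c, α ⟨t, i⟩ * U t c * (V t c * β ⟨t, j⟩) := by
    rw [← mul_assoc, ← hg, h.sum_sigma_mul hUV, mul_assoc, Finset.sum_mul]
    refine Finset.sum_congr rfl fun c _ => ?_
    rw [mul_assoc, ← mul_assoc (V t c), h_sigma.v_mul_sum ⟨⟨t, j⟩, c⟩]
  rw [LinearMap.mulLeftRight_apply, h_unit]
  exact Submodule.sum_mem _ fun c _ =>
    Submodule.subset_span ⟨⟨⟨t, i⟩, c⟩, ⟨⟨t, j⟩, c⟩, rfl, rfl⟩

theorem RankComparable.exists_dyadic_refinement (hcomp : RankComparable N)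
    (hN : IsPseudoRankFunction N) (hsurj : RankSurjective N) {T : Type} [Fintype T] {r : T → ℕ}
    {γ : T → Q} {f : Q} {α β : (Σ t, Fin (r t)) → Q} (h : IsFrame (fun x => γ x.1) f α β)
    (h_sum : ∑ x, α x * β x = f) {n : ℕ} {η δ : ℝ} (hη : 0 ≤ η) (hδ : 0 < δ)
    (hf : N f ≤ 1 / 2 ^ n + η) :
    ∃ (k : ℕ) (π : Q) (ι : Type) (_ : Fintype ι) (g : Q) (p q : ι → Q), 1 ≤ k ∧
      IsIdempotentElem π ∧ N π = 1 / 2 ^ (n + k) ∧ Fintype.card ι ≤ 2 ^ k ∧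
      IsFrame (fun _ => π) g p q ∧ ∑ i, p i * q i = g ∧ N (f - g) ≤ η + δ ∧
      ∀ z, f * z * f ∈ blockSpan K Sigma.fst α β → g * z * g ∈ blockSpan K (fun _ => ()) p q := by
  have h_rank : ∑ t, r t * N (γ t) = N f := by
    rw [← h_sum, h.map_sum hN, Fintype.sum_sigma]
    simp
  obtain ⟨k, a, hk, ha, ha_le, ha_near⟩ :=
    exists_dyadic_weights r (fun t => hN.nonneg (γ t)) n hη hδ (h_rank.trans_le hf)
  obtain ⟨π, hπ, hπ_rank⟩ := hsurj (1 / 2 ^ (n + k))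
    ⟨by positivity, (div_le_one (by positivity)).2 (one_le_pow₀ one_le_two)⟩
  obtain ⟨U, V, hUV⟩ := hcomp.exists_isFrame_sigma hN (a := a) h hπ fun t => hπ_rank ▸ ha t
  have h_sigma := h.sigma hUV
  have h_card : Fintype.card (Σ x : (Σ t, Fin (r t)), Fin (a x.1)) = ∑ t, r t * a t := by
    simp [Fintype.sum_sigma]
  refine ⟨k, π, _, inferInstance, _, _, _, hk, hπ, hπ_rank, h_card.trans_le ha_le,
    h_sigma.restrict, rfl, ?_, fun z hz => h.mul_mul_mem_blockSpan_sigma hUV rfl hz⟩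
  have hf_idem : IsIdempotentElem f := h_sum ▸ h.isIdempotentElem_sum
  rwa [h_sigma.map_sub_sum hN hf_idem, Finset.sum_const, Finset.card_univ, h_card, nsmul_eq_mul,
    hπ_rank, ← h_rank]

theorem IsPseudoRankFunction.sub_mul_mul_le (hN : IsPseudoRankFunction N) {e x : Q}
    (hx : e * x * e = x) (s y s' : Q) :
    N (x - s * y * s') ≤ N (e - s) + N (x - y) + N (e - s') := by
  have h_eq : x - s * y * s' = (e - s) * (x * e) + s * (x - y) * e + s * y * (e - s') := by
    conv_lhs => rw [← hx]
    simp only [mul_sub, sub_mul, mul_assoc]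
    abel
  calc N (x - s * y * s')
      ≤ N ((e - s) * (x * e)) + N (s * (x - y) * e) + N (s * y * (e - s')) := by
        rw [h_eq]
        exact (hN.subadditive _ _).trans (by gcongr; exact hN.subadditive _ _)
    _ ≤ N (e - s) + N (x - y) + N (e - s') := by
        gcongr
        exacts [hN.mul_le_left _ _, hN.mul_mul_le _ _ _, hN.mul_le_right _ _]

theorem mul_mul_mem_blockSpan_of_isPartialIso {ι κ : Type*} {e g s s' z : Q} {p q : ι → Q}
    {u v : κ → Q} (hs : IsPartialIso e g s s') {σ : ι → κ}
    (hσ : ∀ i, u (σ i) = s * p i ∧ v (σ i) = q i * s')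
    (hz : g * z * g ∈ blockSpan K (fun _ => ()) p q) :
    s * z * s' ∈ blockSpan K (fun _ => ()) u v := by
  have h_eq : LinearMap.mulLeftRight K (s, s') (g * z * g) = s * z * s' := by
    simp only [LinearMap.mulLeftRight_apply, mul_assoc, hs.left_mul']
    rw [mul_mul_of_mul_eq hs.mul_right]
  rw [← h_eq]
  refine map_mem_of_mem_blockSpan hz _ fun i j _ => ?_
  have h_unit : s * (p i * q j) * s' = u (σ i) * v (σ j) := by
    simp only [(hσ _).1, (hσ _).2, mul_assoc]
  rw [LinearMap.mulLeftRight_apply, h_unit]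
  exact Submodule.subset_span ⟨σ i, σ j, rfl, rfl⟩

theorem LocallyMatricial.exists_isFrame_approx (hloc : LocallyMatricial K N)
    (hN : IsRankFunction N) (hR : VNRegular Q) (hcomp : RankComparable N)
    (hsurj : RankSurjective N) {e : Q} (he : IsIdempotentElem e) {n : ℕ} (hne : N e = 1 / 2 ^ n)
    {ι : Type*} [Finite ι] (x : ι → Q) (hx : ∀ i, e * x i * e = x i) {ε : ℝ} (hε : 0 < ε) :
    ∃ (k : ℕ) (π : Q) (u v : Fin (2 ^ k) → Q), 1 ≤ k ∧ IsFrame (fun _ => π) e u v ∧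
      ∑ i, u i * v i = e ∧
      ∀ i, ∃ z ∈ blockSpan K (fun _ => ()) u v, N (x i - z) < ε := by
  obtain ⟨δ, hδ, rfl⟩ : ∃ δ > 0, 65 * δ = ε := ⟨ε / 65, by positivity, by ring⟩
  obtain ⟨_, r, γ, f, α, β, hαβ, hαβ_sum, hef, h_approx⟩ :=
    hloc.exists_isFrame_near hN.1 he x hδ
  have hf : N f ≤ 1 / 2 ^ n + 4 * δ := by
    have h_le := hN.1.sub_le e (e - f)
    rw [sub_sub_cancel] at h_le
    linarith
  obtain ⟨k, π, _, _, g, p, q, hk, hπ, hπ_rank, h_card, hpq, hpq_sum, hfg, h_block⟩ :=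
    hcomp.exists_dyadic_refinement (K := K) hN.1 hsurj hαβ hαβ_sum (by positivity) hδ hf
  have heg : N (e - g) ≤ 9 * δ := by linarith [hN.1.sub_le_sub_add_sub e f g]
  have hπ_mul : (2 ^ k : ℕ) * N π = N e := by
    rw [hπ_rank, hne, pow_add]; push_cast; field_simp
  have hge : N g ≤ N e := by
    rw [← hpq_sum, hpq.map_sum hN.1, Finset.sum_const, nsmul_eq_mul, Finset.card_univ, ← hπ_mul]
    gcongr
    exact hN.1.nonneg π
  obtain ⟨s, s', hs, hs_eq, hs_near, hs'_near⟩ :=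
    hcomp.exists_isPartialIso_near hN.1 hR he (hpq_sum ▸ hpq.isIdempotentElem_sum) hge
  obtain ⟨u, v, huv, huv_sum, σ, hσ⟩ :=
    hcomp.exists_isFrame_extension hN (hpq.transport hs hs_eq) hπ he hπ_mul h_card
  refine ⟨k, π, u, v, hk, huv, huv_sum, fun i => ?_⟩
  obtain ⟨y, hy, hy_mem⟩ := h_approx i
  exact ⟨s * y * s', mul_mul_mem_blockSpan_of_isPartialIso hs hσ (h_block y hy_mem),
    by linarith [hN.1.sub_mul_mul_le (hx i) s y s']⟩

end Corner

/-! ### Block-diagonal embeddings -/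

section BlockEmbed

theorem mod_mul_eq_mod_mul_iff {x y a b : ℕ} :
    x % (a * b) = y % (a * b) ↔ x % a = y % a ∧ x / a % b = y / a % b := by
  refine ⟨fun h => ⟨?_, ?_⟩, fun ⟨h, h'⟩ => by rw [Nat.mod_mul, Nat.mod_mul, h, h']⟩
  · simpa using congrArg (· % a) h
  · simpa only [Nat.mod_mul_right_div_self] using congrArg (· / a) h

variable {K : Type*} [Field K] {a b c : ℕ}

/-- The splitting of `Fin b` into `a` consecutive blocks of length `b / a`, used to index the
block-diagonal embedding. -/
def blockEquiv (h : a ∣ b) : Fin a × Fin (b / a) ≃ Fin b :=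
  finProdFinEquiv.trans (finCongr (Nat.mul_div_cancel' h))

theorem blockEquiv_symm_fst (h : a ∣ b) (i : Fin b) :
    (((blockEquiv h).symm i).1 : ℕ) = i / (b / a) := by
  simp [blockEquiv]

theorem blockEquiv_symm_snd (h : a ∣ b) (i : Fin b) :
    (((blockEquiv h).symm i).2 : ℕ) = i % (b / a) := by
  simp [blockEquiv]

variable (K) in
/-- `blockEmbedFun` as an algebra homomorphism, for `a ∣ b`. -/
def blockEmbed (h : a ∣ b) : Matrix (Fin a) (Fin a) K →ₐ[K] Matrix (Fin b) (Fin b) K :=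
  (Matrix.reindexAlgEquiv K K (blockEquiv h)).toAlgHom.comp <|
    AlgHom.ofLinearMap
      { toFun := fun z => z ⊗ₖ (1 : Matrix (Fin (b / a)) (Fin (b / a)) K)
        map_add' := fun x y => Matrix.add_kronecker x y _
        map_smul' := fun k x => Matrix.smul_kronecker k x _ }
      Matrix.one_kronecker_one fun x y => by
        simp only [LinearMap.coe_mk, AddHom.coe_mk, ← Matrix.mul_kronecker_mul, mul_one]

theorem blockEmbed_apply (h : a ∣ b) (z : Matrix (Fin a) (Fin a) K) (i j : Fin b) :
    blockEmbed K h z i j = if (i : ℕ) % (b / a) = j % (b / a) then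
      z ((blockEquiv h).symm i).1 ((blockEquiv h).symm j).1 else 0 := by
  change z ((blockEquiv h).symm i).1 ((blockEquiv h).symm j).1 *
    (1 : Matrix (Fin (b / a)) (Fin (b / a)) K) ((blockEquiv h).symm i).2
      ((blockEquiv h).symm j).2 = _
  simp only [Matrix.one_apply, Fin.ext_iff, blockEquiv_symm_snd, mul_ite, mul_one, mul_zero]

theorem blockEmbed_single (h : a ∣ b) (i j : Fin a) :
    blockEmbed K h (Matrix.single i j 1) =
      ∑ d, Matrix.single (blockEquiv h (i, d)) (blockEquiv h (j, d)) 1 := by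
  have h_kronecker : Matrix.single i j (1 : K) ⊗ₖ (1 : Matrix (Fin (b / a)) (Fin (b / a)) K) =
      ∑ d, Matrix.single (i, d) (j, d) 1 := by
    rw [← Matrix.sum_single_one]
    refine (map_sum (Matrix.kroneckerBilinear (R := K) (Matrix.single i j 1)) _ _).trans ?_
    exact Finset.sum_congr rfl fun d _ =>
      (Matrix.single_kronecker_single i j d d (1 : K) 1).trans (by rw [mul_one])
  change Matrix.reindexAlgEquiv K K (blockEquiv h) (Matrix.single i j 1 ⊗ₖ 1) = _
  simp [h_kronecker, map_sum]

theorem blockEmbed_comp (h : a ∣ b) (h' : b ∣ c) :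
    (blockEmbed K h').comp (blockEmbed K h) = blockEmbed K (h.trans h') := by
  ext z i j
  have h_fst : ∀ i, ((blockEquiv h).symm ((blockEquiv h').symm i).1).1 =
      ((blockEquiv (h.trans h')).symm i).1 := fun i => Fin.ext <| by
    simp only [blockEquiv_symm_fst, Nat.div_div_eq_div_mul, Nat.div_mul_div h' h]
  simp only [AlgHom.comp_apply, blockEmbed_apply, h_fst, blockEquiv_symm_fst,
    ← Nat.div_mul_div h' h, mod_mul_eq_mod_mul_iff, ite_and]

end BlockEmbed

/-! ### Dyadic towers of matrix algebras -/

section Refinement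

variable {K Q : Type*} [Field K] [Ring Q] [Algebra K Q]

theorem frameHom_single {ι : Type*} [Fintype ι] [DecidableEq ι] {π : Q} {u v : ι → Q}
    (h : IsFrame (fun _ => π) 1 u v) (h_sum : ∑ i, u i * v i = 1) (i j : ι) :
    frameHom K h h_sum (Matrix.single i j 1) = u i * v j := by
  simp [frameHom_apply, Matrix.single_apply, ite_and]

section MapSingle

variable {ι : Type*} [Fintype ι] [DecidableEq ι] (φ : Matrix ι ι K →ₐ[K] Q) (o : ι)

theorem isFrame_map_single :
    IsFrame (fun _ => φ (Matrix.single o o 1)) 1 (fun i => φ (Matrix.single i o 1))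
      fun i => φ (Matrix.single o i 1) := by
  simpa only [Matrix.one_mul, Matrix.mul_one, map_one] using
    (isFrame_mul_single o (Matrix.one_mul (1 : Matrix ι ι K))).map φ

theorem map_single_mul_map_single (i j : ι) :
    φ (Matrix.single i o 1) * φ (Matrix.single o j 1) = φ (Matrix.single i j 1) := by
  rw [← map_mul, Matrix.single_mul_single_same, mul_one]

theorem sum_map_single_mul_map_single :
    ∑ i, φ (Matrix.single i o 1) * φ (Matrix.single o i 1) = 1 := by
  simp only [map_single_mul_map_single, ← map_sum, Matrix.sum_single_one, map_one]

end MapSingle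

variable {a b c : ℕ} {φ : Matrix (Fin a) (Fin a) K →ₐ[K] Q} {ψ : Matrix (Fin b) (Fin b) K →ₐ[K] Q}
  {χ : Matrix (Fin c) (Fin c) K →ₐ[K] Q}

/-- The matrix units given by `ψ` refine those given by `φ`: `φ` is the restriction of `ψ` along
the block-diagonal embedding. -/
def Refines (φ : Matrix (Fin a) (Fin a) K →ₐ[K] Q) (ψ : Matrix (Fin b) (Fin b) K →ₐ[K] Q) : Prop :=
  ∃ h : a ∣ b, ψ.comp (blockEmbed K h) = φ

theorem Refines.trans : Refines φ ψ → Refines ψ χ → Refines φ χ := by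
  rintro ⟨h, rfl⟩ ⟨h', rfl⟩
  exact ⟨h.trans h', by rw [AlgHom.comp_assoc, blockEmbed_comp]⟩

theorem Refines.comp_blockEmbed (h : Refines φ χ) (hab : a ∣ b) (hbc : b ∣ c) :
    Refines φ (χ.comp (blockEmbed K hbc)) := by
  obtain ⟨-, rfl⟩ := h
  exact ⟨hab, by rw [AlgHom.comp_assoc, blockEmbed_comp]⟩

theorem Refines.range_le (h : Refines φ ψ) : φ.range ≤ ψ.range := by
  obtain ⟨h, rfl⟩ := h
  exact AlgHom.range_comp_le_range _ _

theorem exists_refines_of_isFrame (φ : Matrix (Fin a) (Fin a) K →ₐ[K] Q) (o : Fin a) {g : ℕ}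
    (hg : a * g = b) {π : Q} {w z : Fin g → Q}
    (h : IsFrame (fun _ => π) (φ (Matrix.single o o 1)) w z)
    (h_sum : ∑ c, w c * z c = φ (Matrix.single o o 1)) :
    ∃ ψ : Matrix (Fin b) (Fin b) K →ₐ[K] Q, Refines φ ψ ∧ ∀ i j c d,
      φ (Matrix.single i o 1) * (w c * z d) * φ (Matrix.single o j 1) ∈ ψ.range := by
  have hab : a ∣ b := Dvd.intro g hg
  obtain rfl : g = b / a := Nat.eq_div_of_mul_eq_right o.pos.ne' hg
  have h_frame := isFrame_map_single φ o
  have h_inner : ∀ i j, ∑ c, φ (Matrix.single i o 1) * w c * (z c * φ (Matrix.single o j 1)) =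
      φ (Matrix.single i j 1) := fun i j => by
    simp only [mul_assoc, ← Finset.mul_sum]
    simp only [← mul_assoc, ← Finset.sum_mul, h_sum]
    rw [mul_assoc, h_frame.mul_v, map_single_mul_map_single]
  let σ := blockEquiv hab
  let u : Fin b → Q := fun x => φ (Matrix.single (σ.symm x).1 o 1) * w (σ.symm x).2
  let v : Fin b → Q := fun x => z (σ.symm x).2 * φ (Matrix.single o (σ.symm x).1 1)
  have h_block : IsFrame (fun _ => π) 1 u v := (h_frame.sigma fun _ => h).comp_injective
    ((Equiv.sigmaEquivProd _ _).symm.injective.comp σ.symm.injective)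
  have h_block_sum : ∑ x, u x * v x = 1 := by
    rw [← σ.sum_comp, Fintype.sum_prod_type]
    simp only [u, v, Equiv.symm_apply_apply, h_inner, ← map_sum, Matrix.sum_single_one, map_one]
  let ψ : Matrix (Fin b) (Fin b) K →ₐ[K] Q := frameHom K h_block h_block_sum
  have h_single : ∀ i j c d, ψ (Matrix.single (σ (i, c)) (σ (j, d)) 1) =
      φ (Matrix.single i o 1) * w c * (z d * φ (Matrix.single o j 1)) := fun i j c d => by
    simp only [ψ, frameHom_single, u, v, Equiv.symm_apply_apply]
  refine ⟨ψ, ⟨hab, ?_⟩, fun i j c d => ⟨_, (h_single i j c d).trans ?_⟩⟩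
  · refine AlgHom.toLinearMap_injective (Matrix.ext_linearMap K fun i j => LinearMap.ext_ring ?_)
    simp [blockEmbed_single, h_single, h_inner, σ]
  · simp only [mul_assoc]

end Refinement

section Tower

variable {K Q : Type*} [Field K] [Ring Q] [Algebra K Q] {N : Q → ℝ}

theorem IsPseudoRankFunction.sub_sum_mul_mul_le (hN : IsPseudoRankFunction N) {ι : Type*}
    [Fintype ι] {u v : ι → Q} (h_sum : ∑ i, u i * v i = 1) (x : Q) (y : ι → ι → Q) :
    N (x - ∑ i, ∑ j, u i * y i j * v j) ≤ ∑ i, ∑ j, N (v i * x * u j - y i j) := by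
  have hx : ∑ i, ∑ j, u i * (v i * x * u j) * v j = x := by
    calc ∑ i, ∑ j, u i * (v i * x * u j) * v j
        = (∑ i, u i * v i) * x * ∑ j, u j * v j := by
          rw [Finset.sum_mul, Finset.sum_mul]
          simp only [Finset.mul_sum, mul_assoc]
      _ = x := by rw [h_sum, one_mul, mul_one]
  calc N (x - ∑ i, ∑ j, u i * y i j * v j)
      = N (∑ i, ∑ j, u i * (v i * x * u j - y i j) * v j) := by
        simp only [mul_sub, sub_mul, Finset.sum_sub_distrib, hx]
    _ ≤ ∑ i, ∑ j, N (u i * (v i * x * u j - y i j) * v j) :=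
        (hN.sum_le _ _).trans (Finset.sum_le_sum fun _ _ => hN.sum_le _ _)
    _ ≤ ∑ i, ∑ j, N (v i * x * u j - y i j) :=
        Finset.sum_le_sum fun _ _ => Finset.sum_le_sum fun _ _ => hN.mul_mul_le _ _ _

theorem LocallyMatricial.exists_refines (hloc : LocallyMatricial K N) (hN : IsRankFunction N)
    (hR : VNRegular Q) (hcomp : RankComparable N) (hsurj : RankSurjective N) {n : ℕ}
    (φ : Matrix (Fin (2 ^ n)) (Fin (2 ^ n)) K →ₐ[K] Q) {ι : Type*} [Finite ι] (x : ι → Q) {ε : ℝ}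
    (hε : 0 < ε) :
    ∃ (m : ℕ) (ψ : Matrix (Fin (2 ^ m)) (Fin (2 ^ m)) K →ₐ[K] Q), n < m ∧ Refines φ ψ ∧
      ∀ i, ∃ z ∈ ψ.range, N (x i - z) < ε := by
  let o : Fin (2 ^ n) := ⟨0, by positivity⟩
  let u : Fin (2 ^ n) → Q := fun i => φ (Matrix.single i o 1)
  let v : Fin (2 ^ n) → Q := fun i => φ (Matrix.single o i 1)
  have h_frame : IsFrame (fun _ => φ (Matrix.single o o 1)) 1 u v := isFrame_map_single φ o
  have h_sum : ∑ i, u i * v i = 1 := sum_map_single_mul_map_single φ o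
  have h_rank : N (φ (Matrix.single o o 1)) = 1 / 2 ^ n := by
    rw [h_frame.map_eq_one_div_card h_sum hN.1, Fintype.card_fin, Nat.cast_pow, Nat.cast_ofNat]
  have h_idem : IsIdempotentElem (φ (Matrix.single o o 1)) := map_single_mul_map_single φ o o o
  obtain ⟨k, π, w, z, hk, hwz, hwz_sum, h_approx⟩ := hloc.exists_isFrame_approx hN hR hcomp hsurj
    h_idem h_rank (fun p : ι × Fin (2 ^ n) × Fin (2 ^ n) => v p.2.1 * x p.1 * u p.2.2)
    (fun p => by
      simp only [mul_assoc, h_frame.u_mul]; rw [mul_mul_of_mul_eq (h_frame.mul_v _)])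
    (ε := ε / (2 ^ n * 2 ^ n)) (by positivity)
  obtain ⟨ψ, hφψ, hψ⟩ := exists_refines_of_isFrame φ o (pow_add 2 n k).symm hwz hwz_sum
  refine ⟨n + k, ψ, by omega, hφψ, fun i => ?_⟩
  choose y hy_mem hy using fun p q => h_approx (i, p, q)
  have h_mem : ∀ p q, u p * y p q * v q ∈ ψ.range := fun p q =>
    map_mem_of_mem_blockSpan (hy_mem p q) (LinearMap.mulLeftRight K (u p, v q))
      (W := Subalgebra.toSubmodule ψ.range) fun c d _ => hψ p q c d
  refine ⟨∑ p, ∑ q, u p * y p q * v q, sum_mem fun p _ => sum_mem fun q _ => h_mem p q, ?_⟩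
  calc N (x i - ∑ p, ∑ q, u p * y p q * v q)
      ≤ ∑ p, ∑ q, N (v p * x i * u q - y p q) := hN.1.sub_sum_mul_mul_le h_sum _ _
    _ < ∑ _ : Fin (2 ^ n), ∑ _ : Fin (2 ^ n), ε / (2 ^ n * 2 ^ n) :=
        Finset.sum_lt_sum_of_nonempty ⟨o, Finset.mem_univ o⟩ fun p _ =>
          Finset.sum_lt_sum_of_nonempty ⟨o, Finset.mem_univ o⟩ fun q _ => hy p q
    _ = ε := by simp; field_simp

theorem exists_tower_of_refines [Nontrivial Q] {d : ℕ → ℕ}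
    (φ : ∀ j, Matrix (Fin (2 ^ d j)) (Fin (2 ^ d j)) K →ₐ[K] Q) (hd : ∀ j, j < d (j + 1))
    (hφ : ∀ j, Refines (φ j) (φ (j + 1))) :
    ∃ A : ℕ → Subalgebra K Q, Monotone A ∧
      (∀ n, Nonempty (A n ≃ₐ[K] Matrix (Fin (2 ^ n)) (Fin (2 ^ n)) K)) ∧
      ∀ j, (φ j).range ≤ A (d j) := by
  let ρ : ∀ m, Matrix (Fin (2 ^ m)) (Fin (2 ^ m)) K →ₐ[K] Q := fun m =>
    (φ (m + 1)).comp (blockEmbed K (pow_dvd_pow 2 (hd m).le))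
  have hρ : ∀ m, Refines (ρ m) (ρ (m + 1)) := fun m =>
    (Refines.trans ⟨_, rfl⟩ (hφ (m + 1))).comp_blockEmbed (pow_dvd_pow 2 m.le_succ) _
  have hφ_lt : ∀ i j, i < j → Refines (φ i) (φ j) := fun i j hij => by
    induction j, hij using Nat.le_induction with
    | base => exact hφ i
    | succ j _ ih => exact ih.trans (hφ j)
  have hd_le : ∀ j, j < d j + 1
    | 0 => Nat.succ_pos _
    | j + 1 => Nat.succ_lt_succ (hd j)
  refine ⟨fun m => (ρ m).range, monotone_nat_of_le_succ fun m => (hρ m).range_le, fun m => ?_,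
    fun j => ((hφ_lt j _ (hd_le j)).comp_blockEmbed dvd_rfl _).range_le⟩
  have : Nonempty (Fin (2 ^ m)) := ⟨0, by positivity⟩
  exact ⟨(AlgEquiv.ofInjective (ρ m) (ρ m).toRingHom.injective).symm⟩

/-- The closure of a subspace in the rank metric, as a subspace. -/
def rankClosure (hN : IsPseudoRankFunction N) (W : Submodule K Q) : Submodule K Q where
  carrier := {x | ∀ ε > 0, ∃ z ∈ W, N (x - z) < ε}
  zero_mem' ε hε := ⟨0, W.zero_mem, by rwa [sub_zero, hN.map_zero]⟩
  add_mem' {x y} hx hy ε hε := by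
    obtain ⟨z, hz, hxz⟩ := hx (ε / 2) (half_pos hε)
    obtain ⟨w, hw, hyw⟩ := hy (ε / 2) (half_pos hε)
    refine ⟨z + w, W.add_mem hz hw, ?_⟩
    rw [add_sub_add_comm]
    linarith [hN.subadditive (x - z) (y - w)]
  smul_mem' k x hx ε hε := by
    obtain ⟨z, hz, hxz⟩ := hx ε hε
    exact ⟨k • z, W.smul_mem k hz, by rw [← smul_sub]; exact (hN.smul_le k _).trans_lt hxz⟩

theorem IsPseudoRankFunction.rankDense_of_le_rankClosure (hN : IsPseudoRankFunction N)
    {V W : Submodule K Q} (hV : RankDense N (V : Set Q)) (hVW : V ≤ rankClosure hN W) :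
    RankDense N (W : Set Q) := by
  intro x ε hε
  obtain ⟨y, hy, hxy⟩ := hV x (ε / 2) (half_pos hε)
  obtain ⟨z, hz, hyz⟩ := hVW hy (ε / 2) (half_pos hε)
  exact ⟨z, hz, by linarith [hN.sub_le_sub_add_sub x y z]⟩

theorem LocallyMatricial.exists_refines_seq (hloc : LocallyMatricial K N)
    (hN : IsRankFunction N) (hR : VNRegular Q) (hcomp : RankComparable N)
    (hsurj : RankSurjective N) (y : ℕ → Q) :
    ∃ (d : ℕ → ℕ) (φ : ∀ j, Matrix (Fin (2 ^ d j)) (Fin (2 ^ d j)) K →ₐ[K] Q), ∀ j,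
      j < d (j + 1) ∧ Refines (φ j) (φ (j + 1)) ∧
        ∀ i ≤ j, ∃ z ∈ (φ (j + 1)).range, N (y i - z) < 1 / (j + 1) := by
  have h_base : IsFrame (fun _ : Fin 1 => 1) (1 : Q) (fun _ => 1) fun _ => 1 :=
    .of_subsingleton (by constructor <;> simp) (one_mul 1)
  obtain ⟨s, -, hs⟩ := exists_seq_of_step
    (α := Σ n : ℕ, Matrix (Fin (2 ^ n)) (Fin (2 ^ n)) K →ₐ[K] Q) (fun j s => j ≤ s.1)
    (fun j s s' => j < s'.1 ∧ Refines s.2 s'.2 ∧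
      ∀ i ≤ j, ∃ z ∈ s'.2.range, N (y i - z) < 1 / (j + 1))
    ⟨0, frameHom K h_base (by simp)⟩ le_rfl fun j ⟨n, φ⟩ hj => by
      obtain ⟨m, ψ, hnm, hφψ, hψ⟩ := hloc.exists_refines hN hR hcomp hsurj φ
        (fun i : Fin (j + 1) => y i) (ε := 1 / (j + 1)) (by positivity)
      exact ⟨⟨m, ψ⟩, hj.trans_lt hnm, hj.trans_lt hnm, hφψ,
        fun i hi => hψ ⟨i, Nat.lt_succ_of_le hi⟩⟩
  exact ⟨fun j => (s j).1, fun j => (s j).2, hs⟩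

theorem LocallyMatricial.isMK [Nontrivial Q] (hloc : LocallyMatricial K N)
    (hN : IsRankFunction N) (hR : VNRegular Q) (hcomp : RankComparable N)
    (hsurj : RankSurjective N) (hcomplete : RankComplete N) {y : ℕ → Q}
    (hy : RankDense N (Submodule.span K (Set.range y) : Set Q)) : IsMK K Q N := by
  obtain ⟨d, φ, h⟩ := hloc.exists_refines_seq hN hR hcomp hsurj y
  obtain ⟨A, hA, hA_matrix, hφA⟩ :=
    exists_tower_of_refines φ (fun j => (h j).1) fun j => (h j).2.1
  refine ⟨hN, hcomplete, A, fun n => hA n.le_succ, hA_matrix, ?_⟩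
  rw [← Subalgebra.coe_iSup_of_directed hA.directed_le]
  refine hN.1.rankDense_of_le_rankClosure (W := Subalgebra.toSubmodule (⨆ n, A n)) hy
    (Submodule.span_le.2 ?_)
  rintro _ ⟨i, rfl⟩ ε hε
  obtain ⟨j, hj⟩ := exists_nat_one_div_lt hε
  obtain ⟨z, hz, hyz⟩ := (h (max i j)).2.2 i (le_max_left i j)
  refine ⟨z, le_iSup A _ (hφA _ hz), hyz.trans_le (le_trans ?_ hj.le)⟩
  gcongr
  exact le_max_right i j

end Tower

/-! ### Completions of ultramatricial algebras -/

section Ultramatricial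

variable {K A B Q : Type*} [Field K] [Ring A] [Algebra K A] [Ring B] [Algebra K B] [Ring Q]
  [Algebra K Q] {N : Q → ℝ}

theorem exists_seq_le_span {V : Submodule K Q} (hV : Module.rank K V ≤ Cardinal.aleph0) :
    ∃ y : ℕ → Q, V ≤ Submodule.span K (Set.range y) := by
  let b := Module.Free.chooseBasis K V
  have : Countable (Module.Free.ChooseBasisIndex K V) := by
    rwa [← Cardinal.mk_le_aleph0_iff, b.mk_eq_rank'']
  obtain ⟨y, hy⟩ := ((Set.countable_range fun i => (b i : Q)).insert 0).exists_eq_range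
    (Set.insert_nonempty _ _)
  refine ⟨y, ?_⟩
  calc V = (Submodule.span K (Set.range b)).map V.subtype := by
        rw [b.span_eq, Submodule.map_subtype_top]
    _ = Submodule.span K (Set.range fun i => (b i : Q)) := by
        rw [Submodule.map_span, ← Set.range_comp]; rfl
    _ ≤ Submodule.span K (Set.range y) :=
        Submodule.span_mono (hy ▸ Set.subset_insert _ _)

theorem IsPseudoRankFunction.isExtremalPseudoRankFunction_of_forall_eq {N : B → ℝ}
    (hN : IsPseudoRankFunction N) (h : ∀ N', IsPseudoRankFunction N' → N' = N) :
    IsExtremalPseudoRankFunction N :=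
  ⟨hN, fun N₁ hN₁ _ _ _ => h N₁ hN₁⟩

theorem IsPseudoRankFunction.eq_of_forall_mem_range {N N' : B → ℝ}
    (hN : IsPseudoRankFunction N) (hN' : IsPseudoRankFunction N')
    (h : ∀ b, ∃ (n : ℕ) (φ : Matrix (Fin n) (Fin n) K →ₐ[K] B), b ∈ φ.range) : N = N' := by
  funext b
  obtain ⟨n, φ, M, rfl⟩ := h b
  exact ((hN.comp φ.toRingHom).map_matrix M).trans ((hN'.comp φ.toRingHom).map_matrix M).symm

theorem isMatricialAlgebra_of_algEquiv_matrix {n : ℕ} (hn : 0 < n)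
    (e : A ≃ₐ[K] Matrix (Fin n) (Fin n) K) : IsMatricialAlgebra K A :=
  ⟨0, fun _ => n, fun _ => hn, ⟨e.trans (AlgEquiv.funUnique K (Fin 1) _).symm⟩⟩

theorem mem_iSup_of_monotone {A : ℕ → Subalgebra K Q} (hA : Monotone A) {x : Q} :
    x ∈ ⨆ n, A n ↔ ∃ n, x ∈ A n := by
  rw [← SetLike.mem_coe, Subalgebra.coe_iSup_of_directed hA.directed_le]
  simp

theorem IsUltramatricialAlgebra.locallyMatricial [Nontrivial Q]
    (hB : IsUltramatricialAlgebra K B) (φ : B →ₐ[K] Q) (hφ : RankDense N (Set.range φ)) :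
    LocallyMatricial K N := by
  intro ε hε n x
  obtain ⟨C, hC, hC_mat, hC_mem⟩ := hB
  choose y hy hxy using fun i => hφ (x i) ε hε
  choose b hb using hy
  choose k hk using fun i => hC_mem (b i)
  have hk_le : ∀ i, k i ≤ ∑ i, k i := fun i =>
    Finset.single_le_sum (fun _ _ => Nat.zero_le _) (Finset.mem_univ i)
  exact ⟨(φ.comp (C (∑ i, k i)).val).range, (hC_mat _).range _, y,
    fun i => ⟨⟨b i, monotone_nat_of_le_succ hC (hk_le i) (hk i)⟩, hb i⟩, hxy⟩

end Ultramatricial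

theorem IsMK.nonempty_ultramatricialCompletionData {K Q : Type} [Field K] [Ring Q] [Algebra K Q]
    {N : Q → ℝ} (h : IsMK K Q N) : Nonempty (UltramatricialCompletionData K Q N) := by
  obtain ⟨hN, hcomplete, A, hA, h_matrix, hdense⟩ := h
  have hA_mono : Monotone A := monotone_nat_of_le_succ hA
  have hA_inj : ∀ n, Function.Injective (Subalgebra.inclusion (le_iSup A n)) := fun n =>
    Subalgebra.inclusion_injective _
  have h_mem : ∀ b : ↥(⨆ n, A n), ∃ n, b ∈ (Subalgebra.inclusion (le_iSup A n)).range := fun b =>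
    ((mem_iSup_of_monotone hA_mono).1 b.2).imp fun n hb => ⟨⟨b, hb⟩, rfl⟩
  have hN_B := hN.1.comp (⨆ n, A n).val.toRingHom
  refine ⟨{
    B := ↥(⨆ n, A n)
    NB := N ∘ (⨆ n, A n).val
    pseudoRank := hN_B
    extremal := hN_B.isExtremalPseudoRankFunction_of_forall_eq fun N' hN' =>
      hN'.eq_of_forall_mem_range (K := K) hN_B fun b => ?_
    ultramatricial := ⟨fun n => (Subalgebra.inclusion (le_iSup A n)).range, fun n => ?_,
      fun n => ?_, h_mem⟩
    φ := (⨆ n, A n).val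
    rank_eq := fun _ => rfl
    dense := fun x ε hε => ?_
    complete := hcomplete }⟩
  · obtain ⟨n, a, rfl⟩ := h_mem b
    obtain ⟨e⟩ := h_matrix n
    exact ⟨2 ^ n, (Subalgebra.inclusion (le_iSup A n)).comp e.symm.toAlgHom, e a, by simp⟩
  · rintro _ ⟨a, rfl⟩
    exact ⟨Subalgebra.inclusion (hA n) a, rfl⟩
  · obtain ⟨e⟩ := h_matrix n
    exact isMatricialAlgebra_of_algEquiv_matrix (by positivity)
      ((AlgEquiv.ofInjective _ (hA_inj n)).symm.trans e)
  · obtain ⟨y, hy, hxy⟩ := hdense x ε hε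
    obtain ⟨n, hn⟩ := Set.mem_iUnion.1 hy
    exact ⟨y, ⟨⟨y, le_iSup A n hn⟩, rfl⟩, hxy⟩

theorem UltramatricialCompletionData.locallyMatricial {K Q : Type} [Field K] [Ring Q] [Algebra K Q]
    [Nontrivial Q] {N : Q → ℝ} (D : UltramatricialCompletionData K Q N) : LocallyMatricial K N :=
  letI := D.ringB
  letI := D.algB
  D.ultramatricial.locallyMatricial D.φ D.dense

/-- **Theorem 2.2** (Ara–Claramunt). Let `Q` be a continuous factor which is a `K`-algebra, with
unique rank function `N_Q`, possessing a dense subalgebra of countable `K`-dimension. The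
following are equivalent: (i) `Q ≅ M_K`; (ii) `Q` is the completion of an ultramatricial
`K`-algebra with respect to an extremal pseudo-rank function; (iii) `Q` is locally approximated
by matricial `K`-subalgebras. -/
theorem statement0 (K : Type) [Field K] (Q : Type) [Ring Q] [Algebra K Q]
    (NQ : Q → ℝ) (hQ : IsContinuousFactor Q) (hNQ : IsRankFunction NQ)
    (Q₀ : Subalgebra K Q) (hdim : Module.rank K Q₀ ≤ Cardinal.aleph0)
    (hdense : RankDense NQ (Q₀ : Set Q)) :
    List.TFAE
      [ IsMK K Q NQ,
        Nonempty (UltramatricialCompletionData K Q NQ),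
        ∀ ε : ℝ, 0 < ε → ∀ (n : ℕ) (x : Fin n → Q),
          ∃ A : Subalgebra K Q, IsMatricialAlgebra K A ∧
            ∃ y : Fin n → Q, (∀ i, y i ∈ A) ∧ ∀ i, NQ (x i - y i) < ε ] := by
  obtain ⟨_, hreg, hinj, hinj', N₀, hN₀, hrange⟩ := hQ
  have hBaer : Module.Baer Q Q := .of_injective hinj
  have hBaer' : Module.Baer Qᵐᵒᵖ Qᵐᵒᵖ := .of_injective hinj'
  have hcomp : RankComparable N₀ := rankComparable_of_baer hN₀ hreg hBaer
  have hsurj : RankSurjective N₀ := rankSurjective_of_range_eq hN₀.1 hreg hrange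
  obtain rfl : NQ = N₀ := hcomp.eq_of_isPseudoRankFunction hN₀ hsurj hreg hNQ.1
  have hcomplete : RankComplete NQ := rankComplete_of_baer hNQ.1 hreg hBaer hBaer' hcomp hsurj
  obtain ⟨y, hy⟩ := exists_seq_le_span (V := Subalgebra.toSubmodule Q₀) hdim
  have hy_dense : RankDense NQ (Submodule.span K (Set.range y) : Set Q) := fun x ε hε =>
    (hdense x ε hε).imp fun _ hz => ⟨hy hz.1, hz.2⟩
  tfae_have 1 → 2 := fun h => h.nonempty_ultramatricialCompletionData
  tfae_have 2 → 3 := fun ⟨D⟩ => D.locallyMatricial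
  tfae_have 3 → 1 := fun h => LocallyMatricial.isMK h hNQ hreg hcomp hsurj hcomplete hy_dense
  tfae_finish

end AraClaramunt
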